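/- arXiv:1312.3735 — 11 statements merged into one kernel-verified Lean document; each statement's English description precedes it below -/
import Mathlib

section
/- Let 𝒳 be a finite nonempty set, let P be a probability mass function on 𝒳, and let ρ > 0. Then for every positive integer M and every function f : 𝒳 → {1,…,M}, the ρ-th moment of the number of performed tasks satisfies Σ_{x∈𝒳} P(x)·|f⁻¹(f(x))|^ρ ≥ 2^{ρ·(H_{1/(1+ρ)}(P) − log₂ M)}. -/
open Filter Real

/-- The Rényi entropy of order `1/(1+ρ)` (base-2 logarithm) of a PMF `P`. -/
noncomputable def renyiEnt {Y : Type*} [Fintype Y] (ρ : ℝ) (P : Y → ℝ) : ℝ :=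
  ((1 + ρ) / ρ) * Real.logb 2 (∑ y, P y ^ ((1 : ℝ) / (1 + ρ)))

lemma sum_inv_card_le {X : Type*} [Fintype X] (M : ℕ) (f : X → Fin M) :
    ∑ x, ((Finset.univ.filter fun y => f y = f x).card : ℝ)⁻¹ ≤ M := by
  rw [← Finset.sum_fiberwise Finset.univ f]
  calc _ ≤ ∑ _m : Fin M, (1 : ℝ) := by
        refine Finset.sum_le_sum fun m _ => ?_
        have h : ∀ x ∈ Finset.univ.filter (fun y => f y = m),
            ((Finset.univ.filter fun y => f y = f x).card : ℝ)⁻¹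
              = ((Finset.univ.filter fun y => f y = m).card : ℝ)⁻¹ := by
          intro x hx
          rw [(Finset.mem_filter.1 hx).2]
        rw [Finset.sum_congr rfl h, Finset.sum_const, nsmul_eq_mul]
        exact mul_inv_le_one
    _ = M := by simp

/-- lower bound on the ρ-th moment of the number of performed tasks. -/
theorem tasks_lower_bound {X : Type*} [Fintype X] [Nonempty X]
    (P : X → ℝ) (hP0 : ∀ x, 0 ≤ P x) (hP1 : ∑ x, P x = 1)
    (ρ : ℝ) (hρ : 0 < ρ) (M : ℕ) (hM : 0 < M) (f : X → Fin M) :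
    (2 : ℝ) ^ (ρ * (renyiEnt ρ P - Real.logb 2 (M : ℝ))) ≤
      ∑ x, P x * ((Finset.univ.filter fun y => f y = f x).card : ℝ) ^ ρ := by
  have hp : 0 < 1 + ρ := by linarith
  have hM' : (0 : ℝ) < M := by exact_mod_cast hM
  set n : X → ℝ := fun x => ((Finset.univ.filter fun y => f y = f x).card : ℝ) with hn
  have hnpos : ∀ x, 0 < n x := by
    intro x
    simp only [hn, Nat.cast_pos]
    exact Finset.card_pos.2 ⟨x, by simp⟩
  set S : ℝ := ∑ y, P y ^ ((1 : ℝ) / (1 + ρ)) with hS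
  have hSpos : 0 < S := by
    have hex : ∃ x, P x ≠ 0 := by
      by_contra! h
      simp [h] at hP1
    obtain ⟨x, hx⟩ := hex
    exact Finset.sum_pos' (fun y _ => rpow_nonneg (hP0 y) _)
      ⟨x, Finset.mem_univ _, rpow_pos_of_pos (lt_of_le_of_ne (hP0 x) (Ne.symm hx)) _⟩
  set E : ℝ := ∑ x, P x * n x ^ ρ with hE
  have hE0 : 0 ≤ E := Finset.sum_nonneg fun x _ =>
    mul_nonneg (hP0 x) (rpow_nonneg (hnpos x).le _)
  have hpq : (1 + ρ).HolderConjugate ((1 + ρ) / ρ) := by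
    rw [Real.holderConjugate_iff]
    refine ⟨by linarith, ?_⟩
    field_simp
  have hN0 : 0 ≤ ∑ x, (n x)⁻¹ := Finset.sum_nonneg fun x _ => (inv_pos.2 (hnpos x)).le
  have hold := Real.inner_le_Lp_mul_Lq_of_nonneg Finset.univ
    (f := fun x => (P x * n x ^ ρ) ^ (1 / (1 + ρ)))
    (g := fun x => (n x)⁻¹ ^ (ρ / (1 + ρ))) hpq
    (fun x _ => rpow_nonneg (mul_nonneg (hP0 x) (rpow_nonneg (hnpos x).le _)) _)
    (fun x _ => rpow_nonneg (inv_pos.2 (hnpos x)).le _)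
  have e1 : ∀ x, (P x * n x ^ ρ) ^ (1 / (1 + ρ)) * (n x)⁻¹ ^ (ρ / (1 + ρ))
      = P x ^ ((1 : ℝ) / (1 + ρ)) := by
    intro x
    have hx := hnpos x
    rw [mul_rpow (hP0 x) (rpow_nonneg hx.le _), ← rpow_mul hx.le, inv_rpow hx.le, mul_assoc,
      mul_one_div, mul_inv_cancel₀ (rpow_pos_of_pos hx _).ne', mul_one]
  have e2 : ∀ x, ((P x * n x ^ ρ) ^ (1 / (1 + ρ))) ^ (1 + ρ) = P x * n x ^ ρ := by
    intro x
    rw [← rpow_mul (mul_nonneg (hP0 x) (rpow_nonneg (hnpos x).le _)),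
      one_div_mul_cancel hp.ne', rpow_one]
  have e3 : ∀ x, ((n x)⁻¹ ^ (ρ / (1 + ρ))) ^ ((1 + ρ) / ρ) = (n x)⁻¹ := by
    intro x
    have h1 : ρ / (1 + ρ) * ((1 + ρ) / ρ) = 1 := by field_simp
    rw [← rpow_mul (inv_pos.2 (hnpos x)).le, h1, rpow_one]
  simp only [e1, e2, e3] at hold
  have hle : S ≤ E ^ (1 / (1 + ρ)) * (M : ℝ) ^ (1 / ((1 + ρ) / ρ)) :=
    hold.trans (mul_le_mul_of_nonneg_left
      (rpow_le_rpow hN0 (sum_inv_card_le M f) (by positivity)) (rpow_nonneg hE0 _))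
  have hle2 : S ^ (1 + ρ) ≤ E * (M : ℝ) ^ ρ := by
    refine (rpow_le_rpow hSpos.le hle hp.le).trans (le_of_eq ?_)
    have h1 : 1 / ((1 + ρ) / ρ) * (1 + ρ) = ρ := by field_simp
    rw [mul_rpow (rpow_nonneg hE0 _) (rpow_nonneg hM'.le _), ← rpow_mul hE0, ← rpow_mul hM'.le,
      one_div_mul_cancel hp.ne', rpow_one, h1]
  have hlhs : (2 : ℝ) ^ (ρ * (renyiEnt ρ P - Real.logb 2 (M : ℝ)))
      = S ^ (1 + ρ) / (M : ℝ) ^ ρ := by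
    have h1 : ρ * (renyiEnt ρ P - Real.logb 2 (M : ℝ))
        = Real.logb 2 S * (1 + ρ) - Real.logb 2 (M : ℝ) * ρ := by
      rw [renyiEnt, ← hS]
      field_simp
    rw [h1, rpow_sub two_pos, rpow_mul two_pos.le, rpow_mul two_pos.le,
      rpow_logb two_pos (by norm_num) hSpos, rpow_logb two_pos (by norm_num) hM']
  rw [hlhs, div_le_iff₀ (rpow_pos_of_pos hM' _)]
  exact hle2
end

section
/- Let 𝒳 be a finite nonempty set, let P be a probability mass function on 𝒳, and let ρ > 0. Then for every integer M with M > log₂|𝒳| + 2 there exists a function f : 𝒳 → {1,…,M} such that Σ_{x∈𝒳} P(x)·|f⁻¹(f(x))|^ρ < 1 + 2^{ρ·(H_{1/(1+ρ)}(P) − log₂ M̃)}, where M̃ = (M − log₂|𝒳| − 2)/4. -/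
open Filter Real

theorem rank_exists {X : Type*} (s : Finset X) :
    ∃ r : X → ℕ, (∀ x ∈ s, r x < s.card) ∧ ∀ x ∈ s, ∀ y ∈ s, r x = r y → x = y := by
  classical
  refine ⟨fun x => if h : x ∈ s then (s.equivFin ⟨x, h⟩ : ℕ) else 0, ?_, ?_⟩
  · intro x hx
    simp [hx]
  · intro x hx y hy h
    simp only [hx, hy, dite_true] at h
    have := s.equivFin.injective (Fin.ext h)
    simpa using this

theorem partition_exists {X : Type*} [Fintype X] (k : X → ℕ) (K M : ℕ)
    (hk : ∀ x, k x ≤ K) (hK : Fintype.card X ≤ 2 ^ K)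
    (hM : ∑ i ∈ Finset.range K, ((Finset.univ.filter fun x => k x = i).card / 2 ^ i + 1) + 1 ≤ M) :
    ∃ f : X → Fin M, ∀ x, (Finset.univ.filter fun y => f y = f x).card ≤ 2 ^ (k x) := by
  classical
  choose r hr hinj using fun i => rank_exists (Finset.univ.filter fun x : X => k x = i)
  simp only [Finset.mem_filter, Finset.mem_univ, true_and] at hr hinj
  let N : ℕ → ℕ := fun i => if i < K then
    (Finset.univ.filter fun x => k x = i).card / 2 ^ i + 1 else 1
  let T : Finset (Σ _ : ℕ, ℕ) := (Finset.range (K + 1)).sigma fun i => Finset.range (N i)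
  have hT : T.card ≤ M := by
    refine le_trans (le_of_eq ?_) hM
    simp only [T, Finset.card_sigma, Finset.card_range, Finset.sum_range_succ]
    congr 1
    · refine Finset.sum_congr rfl fun i hi => ?_
      simp [N, Finset.mem_range.1 hi]
    · simp [N]
  let g : X → Σ _ : ℕ, ℕ := fun x => ⟨k x, r (k x) x / 2 ^ k x⟩
  have hg : ∀ x, g x ∈ T := by
    intro x
    have h1 := hr (k x) x rfl
    simp only [T, g, Finset.mem_sigma, Finset.mem_range]
    refine ⟨Nat.lt_succ_of_le (hk x), ?_⟩
    by_cases h : k x < K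
    · simp only [N, h, if_true]
      exact Nat.lt_succ_of_le (Nat.div_le_div_right h1.le)
    · simp only [N, h, if_false]
      have h2 : k x = K := le_antisymm (hk x) (not_lt.1 h)
      rw [Nat.div_lt_iff_lt_mul (by positivity), one_mul]
      refine lt_of_lt_of_le h1 ((Finset.card_le_univ _).trans ?_)
      rw [h2]; exact hK
  refine ⟨fun x => Fin.castLE hT (T.equivFin ⟨g x, hg x⟩), fun x => ?_⟩
  have hsub : (Finset.univ.filter fun y =>
      Fin.castLE hT (T.equivFin ⟨g y, hg y⟩) = Fin.castLE hT (T.equivFin ⟨g x, hg x⟩)) ⊆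
      Finset.univ.filter fun y => k y = k x ∧ r (k x) y / 2 ^ k x = r (k x) x / 2 ^ k x := by
    intro y hy
    simp only [Finset.mem_filter, Finset.mem_univ, true_and] at hy ⊢
    have h := congrArg Subtype.val (T.equivFin.injective (Fin.castLE_injective hT hy))
    simp only [g, Sigma.mk.injEq, heq_eq_eq] at h
    obtain ⟨h1, h2⟩ := h
    rw [h1] at h2
    exact ⟨h1, h2⟩
  refine (Finset.card_le_card hsub).trans ?_
  have := Finset.card_le_card_of_injOn (s := Finset.univ.filter fun y => k y = k x ∧ r (k x) y / 2 ^ k x = r (k x) x / 2 ^ k x) (t := Finset.range (2 ^ k x)) (fun y => r (k x) y % 2 ^ k x) ?_ ?_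
  · simpa using this
  · intro y _
    simpa using Nat.mod_lt _ (by positivity)
  · intro y hy z hz h
    simp only [Finset.coe_filter, Finset.mem_univ, true_and, Set.mem_setOf_eq] at hy hz h
    refine hinj (k x) y hy.1 z hz.1 ?_
    rw [← Nat.div_add_mod (r (k x) y) (2 ^ k x), ← Nat.div_add_mod (r (k x) z) (2 ^ k x), hy.2, hz.2, h]

theorem ceil_bound (ξ ρ : ℝ) (hξ : 0 < ξ) (hρ : 0 < ρ) :
    ((⌈ξ⌉₊ : ℕ) : ℝ) ^ ρ < 1 + (2 * ξ) ^ ρ := by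
  have hp : 0 < (2 * ξ) ^ ρ := by positivity
  by_cases h : ξ ≤ 1
  · have h1 : ((⌈ξ⌉₊ : ℕ) : ℝ) ≤ 1 := by exact_mod_cast Nat.ceil_le.2 (by simpa using h)
    have := Real.rpow_le_one (by positivity) h1 hρ.le
    linarith
  · have h1 : ((⌈ξ⌉₊ : ℕ) : ℝ) ≤ 2 * ξ := by
      have := Nat.ceil_lt_add_one hξ.le
      linarith
    have := Real.rpow_le_rpow (by positivity) h1 hρ.le
    linarith

/-- achievability (direct part) of the one-shot bound. -/
theorem tasks_upper_bound {X : Type*} [Fintype X] [Nonempty X]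
    (P : X → ℝ) (hP0 : ∀ x, 0 ≤ P x) (hP1 : ∑ x, P x = 1)
    (ρ : ℝ) (hρ : 0 < ρ) (M : ℕ) (hM : Real.logb 2 (Fintype.card X : ℝ) + 2 < (M : ℝ)) :
    ∃ f : X → Fin M,
      ∑ x, P x * ((Finset.univ.filter fun y => f y = f x).card : ℝ) ^ ρ <
        1 + (2 : ℝ) ^ (ρ * (renyiEnt ρ P -
          Real.logb 2 (((M : ℝ) - Real.logb 2 (Fintype.card X : ℝ) - 2) / 4))) := by
  classical
  obtain ⟨D, hD⟩ : ∃ D : ℝ, D = (M : ℝ) - Real.logb 2 (Fintype.card X : ℝ) - 2 := ⟨_, rfl⟩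
  have hDpos : 0 < D := by linarith
  obtain ⟨w, hw⟩ : ∃ w : X → ℝ, w = fun x => P x ^ ((1 : ℝ) / (1 + ρ)) := ⟨_, rfl⟩
  have hw0 : ∀ x, 0 ≤ w x := fun x => by rw [hw]; exact Real.rpow_nonneg (hP0 x) _
  have hwpos : ∀ x, 0 < P x → 0 < w x := fun x h => by rw [hw]; exact Real.rpow_pos_of_pos h _
  have hPw : ∀ x, w x ^ (1 + ρ) = P x := fun x => by
    rw [hw]
    simp only
    rw [← Real.rpow_mul (hP0 x), one_div, inv_mul_cancel₀ (by positivity), Real.rpow_one]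
  obtain ⟨x0, hx0⟩ : ∃ x, 0 < P x := by
    by_contra! h
    have := Finset.sum_nonpos fun x (_ : x ∈ Finset.univ) => h x
    linarith
  obtain ⟨S, hS⟩ : ∃ S : ℝ, S = ∑ x, w x := ⟨_, rfl⟩
  have hSpos : 0 < S := by
    rw [hS]; exact Finset.sum_pos' (fun x _ => hw0 x) ⟨x0, Finset.mem_univ _, hwpos x0 hx0⟩
  have hrhs : (2 : ℝ) ^ (ρ * (renyiEnt ρ P - Real.logb 2 (D / 4))) = (4 * S / D) ^ ρ * S := by
    have e1 : ρ * (renyiEnt ρ P - Real.logb 2 (D / 4)) =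
        Real.logb 2 (4 * S / D) * ρ + Real.logb 2 S := by
      have : renyiEnt ρ P = ((1 + ρ) / ρ) * Real.logb 2 S := by rw [hS, hw]; rfl
      have e2 : 4 * S / D = S / (D / 4) := by field_simp
      rw [this, e2, Real.logb_div hSpos.ne' (by positivity)]
      field_simp
      ring
    rw [e1, Real.rpow_add (by norm_num), Real.rpow_mul (by norm_num),
      Real.rpow_logb (by norm_num) (by norm_num) (by positivity),
      Real.rpow_logb (by norm_num) (by norm_num) hSpos]
  rw [← hD, hrhs]
  obtain ⟨β, hβ⟩ : ∃ β : ℝ, β = 2 * S / D := ⟨_, rfl⟩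
  have hβpos : 0 < β := by rw [hβ]; positivity
  have hξpos : ∀ x, 0 < P x → 0 < β / w x := fun x h => div_pos hβpos (hwpos x h)
  let K := Nat.clog 2 (Fintype.card X)
  have hKle : Fintype.card X ≤ 2 ^ K := Nat.le_pow_clog (by norm_num) _
  have hKlt : (K : ℝ) < Real.logb 2 (Fintype.card X : ℝ) + 1 := by
    have h1 : (1 : ℝ) ≤ Fintype.card X := by exact_mod_cast Fintype.card_pos
    have h2 := Real.ceil_logb_natCast (b := 2) (r := (Fintype.card X : ℝ)) (by positivity)
    simp only [Int.clog_natCast] at h2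
    have h3 := Int.ceil_lt_add_one (Real.logb ((2 : ℕ) : ℝ) (Fintype.card X : ℝ))
    rw [h2] at h3
    exact_mod_cast h3
  let k : X → ℕ := fun x => if P x = 0 then K else min K (Nat.log 2 ⌈β / w x⌉₊)
  have hk : ∀ x, k x ≤ K := fun x => by
    simp only [k]; split_ifs <;> simp
  have hclass : ∀ i < K, ((Finset.univ.filter fun x => k x = i).card : ℝ) / 2 ^ i ≤
      ∑ x ∈ Finset.univ.filter (fun x => k x = i), 2 / β * w x := by
    intro i hi
    have : ((Finset.univ.filter fun x => k x = i).card : ℝ) / 2 ^ i =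
        ∑ x ∈ Finset.univ.filter (fun x => k x = i), (1 : ℝ) / 2 ^ i := by
      rw [Finset.sum_const, nsmul_eq_mul]; ring
    rw [this]
    refine Finset.sum_le_sum fun x hx => ?_
    have hx := (Finset.mem_filter.1 hx).2
    by_cases hP : P x = 0
    · simp only [k, hP, if_true] at hx; omega
    simp only [k, hP, if_false] at hx
    have hlog : Nat.log 2 ⌈β / w x⌉₊ = i := by omega
    have hlt : ⌈β / w x⌉₊ < 2 ^ (i + 1) := by
      rw [← hlog]; exact Nat.lt_pow_succ_log_self (by norm_num) _
    have hPp : 0 < P x := lt_of_le_of_ne (hP0 x) (Ne.symm hP)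
    have hwp := hwpos x hPp
    have h1 : β / w x ≤ 2 ^ (i + 1) := (Nat.le_ceil _).trans (by exact_mod_cast hlt.le)
    rw [div_le_iff₀ hwp, pow_succ] at h1
    rw [div_mul_eq_mul_div, div_le_div_iff₀ (by positivity) hβpos]
    linarith
  have hsum : ∑ i ∈ Finset.range K, ((Finset.univ.filter fun x => k x = i).card : ℝ) / 2 ^ i
      ≤ D := by
    calc _ ≤ ∑ i ∈ Finset.range K, ∑ x ∈ Finset.univ.filter (fun x => k x = i), 2 / β * w x :=
          Finset.sum_le_sum fun i hi => hclass i (Finset.mem_range.1 hi)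
      _ ≤ ∑ i ∈ Finset.range (K + 1),
            ∑ x ∈ Finset.univ.filter (fun x => k x = i), 2 / β * w x := by
          rw [Finset.sum_range_succ]
          have : 0 ≤ ∑ x ∈ Finset.univ.filter (fun x => k x = K), 2 / β * w x :=
            Finset.sum_nonneg fun x _ => mul_nonneg (by positivity) (hw0 x)
          linarith
      _ = ∑ x, 2 / β * w x := Finset.sum_fiberwise_of_maps_to
          (fun x _ => Finset.mem_range.2 (Nat.lt_succ_of_le (hk x))) _
      _ = D := by
          rw [← Finset.mul_sum, ← hS, hβ]; field_simp
  have hMtot : ∑ i ∈ Finset.range K,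
      ((Finset.univ.filter fun x => k x = i).card / 2 ^ i + 1) + 1 ≤ M := by
    have h1 : ((∑ i ∈ Finset.range K,
      ((Finset.univ.filter fun x => k x = i).card / 2 ^ i + 1) : ℕ) : ℝ) ≤ D + K := by
      push_cast
      rw [Finset.sum_add_distrib]
      simp only [Finset.sum_const, Finset.card_range, nsmul_eq_mul, mul_one]
      refine add_le_add (le_trans (Finset.sum_le_sum fun i _ => ?_) hsum) le_rfl
      refine Nat.cast_div_le.trans (le_of_eq ?_)
      push_cast; rfl
    have h2 : ((∑ i ∈ Finset.range K,
      ((Finset.univ.filter fun x => k x = i).card / 2 ^ i + 1) + 1 : ℕ) : ℝ) ≤ M := by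
      rw [Nat.cast_add, Nat.cast_one]; linarith
    exact_mod_cast h2
  obtain ⟨f, hf⟩ := partition_exists k K M hk hKle hMtot
  refine ⟨f, ?_⟩
  have key : ∀ x, 0 < P x → P x * ((Finset.univ.filter fun y => f y = f x).card : ℝ) ^ ρ <
      P x + (4 * S / D) ^ ρ * w x := by
    intro x hPp
    have hwp := hwpos x hPp
    have hc : ⌈β / w x⌉₊ ≠ 0 := (Nat.ceil_pos.2 (hξpos x hPp)).ne'
    have h1 : (Finset.univ.filter fun y => f y = f x).card ≤ ⌈β / w x⌉₊ := by
      refine (hf x).trans ((Nat.pow_le_pow_right (by norm_num) ?_).trans (Nat.pow_log_le_self 2 hc))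
      simp [k, hPp.ne']
    have h2 : ((Finset.univ.filter fun y => f y = f x).card : ℝ) ^ ρ < 1 + (2 * (β / w x)) ^ ρ :=
      lt_of_le_of_lt (Real.rpow_le_rpow (by positivity) (by exact_mod_cast h1) hρ.le)
        (ceil_bound _ ρ (hξpos x hPp) hρ)
    have h3 : P x * (2 * (β / w x)) ^ ρ = (4 * S / D) ^ ρ * w x := by
      have e : 2 * (β / w x) = (4 * S / D) / w x := by rw [hβ]; ring
      rw [e, Real.div_rpow (by positivity) hwp.le, ← hPw x, Real.rpow_add hwp, Real.rpow_one]
      have := Real.rpow_pos_of_pos hwp ρ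
      field_simp
    calc _ < P x * (1 + (2 * (β / w x)) ^ ρ) := mul_lt_mul_of_pos_left h2 hPp
      _ = _ := by rw [mul_add, mul_one, h3]
  calc _ < ∑ x, (P x + (4 * S / D) ^ ρ * w x) := by
        refine Finset.sum_lt_sum (fun x _ => ?_) ⟨x0, Finset.mem_univ _, key x0 hx0⟩
        rcases (hP0 x).eq_or_lt with h | h
        · rw [← h, zero_mul, zero_add]
          exact mul_nonneg (by positivity) (hw0 x)
        · exact (key x h).le
    _ = _ := by rw [Finset.sum_add_distrib, hP1, ← Finset.mul_sum, ← hS]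
end

section
/- Let 𝒳 be a finite nonempty set, let ρ > 0, and let (Pₙ)_{n≥1} be a sequence where Pₙ is a probability mass function on 𝒳ⁿ (the law of the first n symbols X₁,…,Xₙ of a source with alphabet 𝒳). If R > limsup_{n→∞} H_{1/(1+ρ)}(Pₙ)/n, then there exist functions fₙ : 𝒳ⁿ → {1,…,⌊2^{nR}⌋} such that lim_{n→∞} Σ_{xⁿ∈𝒳ⁿ} Pₙ(xⁿ)·|fₙ⁻¹(fₙ(xⁿ))|^ρ = 1. -/
open Filter Real

lemma exists_rank {Y : Type*} [DecidableEq Y] (G : Finset Y) :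
    ∃ r : Y → ℕ, (∀ x ∈ G, r x < G.card) ∧ Set.InjOn r G := by
  refine ⟨fun x => if h : x ∈ G then (G.equivFin ⟨x, h⟩ : ℕ) else 0, ?_, ?_⟩
  · intro x hx
    simp only [hx, dif_pos]
    exact (G.equivFin ⟨x, hx⟩).2
  · intro x hx y hy h
    have hx' : x ∈ G := hx
    have hy' : y ∈ G := hy
    simp only [hx', hy', dif_pos] at h
    have := G.equivFin.injective (Fin.ext h)
    simpa using this

lemma exists_partition {Y : Type*} [Fintype Y] (k : Y → ℕ) (K M : ℕ)
    (hk : ∀ x, k x ≤ K) (hM : ∑ x, (1 : ℝ) / 2 ^ (k x) + (K + 1) ≤ M) :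
    ∃ f : Y → Fin M, ∀ x, (Finset.univ.filter fun y => f y = f x).card ≤ 2 ^ (k x) := by
  classical
  have h := fun j : ℕ => exists_rank (Finset.univ.filter fun y : Y => k y = j)
  choose r hr1 hr2 using h
  set G : ℕ → Finset Y := fun j => Finset.univ.filter fun y : Y => k y = j with hG
  let Z : Finset (Σ _ : ℕ, ℕ) :=
    (Finset.range (K + 1)).sigma (fun j => Finset.range ((G j).card / 2 ^ j + 1))
  have hZ : Z.card ≤ M := by
    have h1 : (Z.card : ℝ) ≤ M := by
      refine le_trans ?_ hM
      simp only [Z, Finset.card_sigma, Finset.card_range]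
      push_cast
      rw [Finset.sum_add_distrib]
      have h2 : ∑ x, (1 : ℝ) / 2 ^ (k x)
          = ∑ j ∈ Finset.range (K + 1), ((G j).card : ℝ) / 2 ^ j := by
        rw [← Finset.sum_fiberwise_of_maps_to (s := Finset.univ) (t := Finset.range (K + 1)) (g := k)]
        · refine Finset.sum_congr rfl fun j _ => ?_
          rw [Finset.sum_congr rfl (g := fun _ => (1 : ℝ) / 2 ^ j)]
          · simp [hG, div_eq_mul_inv]
          · intro x hx
            rw [(Finset.mem_filter.1 hx).2]
        · intro x _
          have := hk x
          simp; omega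
      rw [h2]
      have h3 : ∑ j ∈ Finset.range (K + 1), (((G j).card / 2 ^ j : ℕ) : ℝ)
          ≤ ∑ j ∈ Finset.range (K + 1), ((G j).card : ℝ) / 2 ^ j := by
        refine Finset.sum_le_sum fun j _ => ?_
        have := @Nat.cast_div_le ℝ _ _ _ (G j).card (2 ^ j)
        simpa using this
      simp only [Finset.sum_const, Finset.card_range]
      simp
      linarith
    exact_mod_cast h1
  let g : Y → (Σ _ : ℕ, ℕ) := fun x => ⟨k x, r (k x) x / 2 ^ (k x)⟩
  have hg : ∀ x, g x ∈ Z := by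
    intro x
    have h1 := hk x
    have h2 := hr1 (k x) x (by simp)
    simp only [Z, g, Finset.mem_sigma, Finset.mem_range]
    refine ⟨by omega, ?_⟩
    exact Nat.lt_succ_of_le (Nat.div_le_div_right h2.le)
  refine ⟨fun x => Fin.castLE hZ (Z.equivFin ⟨g x, hg x⟩), fun x => ?_⟩
  have key : ∀ y, Fin.castLE hZ (Z.equivFin ⟨g y, hg y⟩) = Fin.castLE hZ (Z.equivFin ⟨g x, hg x⟩) →
      k y = k x ∧ r (k x) y / 2 ^ (k x) = r (k x) x / 2 ^ (k x) := by
    intro y h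
    have h1 := Z.equivFin.injective (Fin.castLE_injective hZ h)
    have h2 : g y = g x := by simpa using h1
    simp only [g, Sigma.mk.injEq] at h2
    obtain ⟨h3, h4⟩ := h2
    rw [h3] at h4
    exact ⟨h3, eq_of_heq h4⟩
  set q := r (k x) x / 2 ^ (k x) with hq
  have : (Finset.univ.filter fun y => Fin.castLE hZ (Z.equivFin ⟨g y, hg y⟩) =
      Fin.castLE hZ (Z.equivFin ⟨g x, hg x⟩)).card ≤
      (Finset.Ico (q * 2 ^ k x) (q * 2 ^ k x + 2 ^ k x)).card := by
    refine Finset.card_le_card_of_injOn (r (k x)) ?_ ?_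
    · intro y hy
      obtain ⟨_, h2⟩ := key y (by simpa using hy)
      have hpos : 0 < 2 ^ k x := by positivity
      have h3 := Nat.div_add_mod (r (k x) y) (2 ^ k x)
      have h4 := Nat.mod_lt (r (k x) y) hpos
      rw [h2, mul_comm] at h3
      simp only [Finset.coe_Ico, Set.mem_Ico]
      omega
    · intro y hy z hz h
      have h1 := (key y (by simpa using hy)).1
      have h2 := (key z (by simpa using hz)).1
      exact hr2 (k x) (by simp [h1]) (by simp [h2]) h
  simpa using this

lemma one_shot {Y : Type*} [Fintype Y] [Nonempty Y] (ρ : ℝ) (hρ : 0 < ρ) (P : Y → ℝ)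
    (hP0 : ∀ x, 0 ≤ P x) (hP1 : ∑ x, P x = 1) (M : ℕ) (hM0 : 0 < M)
    (hS : 0 < ∑ y, P y ^ ((1 : ℝ) / (1 + ρ)))
    (hM : (Nat.log 2 (Fintype.card Y) : ℝ) + 3 ≤ M / 2) :
    ∃ f : Y → Fin M,
      ∑ x, P x * ((Finset.univ.filter fun y => f y = f x).card : ℝ) ^ ρ ≤
        1 + (4 / M) ^ ρ * (∑ y, P y ^ ((1 : ℝ) / (1 + ρ))) ^ (1 + ρ) := by
  classical
  set S := ∑ y, P y ^ ((1 : ℝ) / (1 + ρ)) with hSdef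
  set a : ℝ := 1 / (1 + ρ) with ha
  have hM0' : (0 : ℝ) < M := by exact_mod_cast hM0
  set c : ℝ := 4 * S / M with hc
  have hcpos : 0 < c := by positivity
  set K := Nat.log 2 (Fintype.card Y) with hK
  let k : Y → ℕ := fun x => if P x = 0 then K else min K (Nat.log 2 ⌊c / P x ^ a⌋₊)
  have hcard : (0 : ℝ) < Fintype.card Y := by exact_mod_cast Fintype.card_pos
  have hK2 : (1 : ℝ) / 2 ^ K ≤ 2 / Fintype.card Y := by
    have h1 : Fintype.card Y < 2 ^ (K + 1) := Nat.lt_pow_succ_log_self (by norm_num) _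
    have h2 : (Fintype.card Y : ℝ) ≤ 2 ^ K * 2 := by
      have := h1.le
      rw [pow_succ] at this
      exact_mod_cast this
    rw [div_le_div_iff₀ (by positivity) hcard]
    linarith
  obtain ⟨f, hf⟩ := exists_partition k K M (by intro x; simp only [k]; split_ifs <;> simp) (by
    have h1 : ∀ x, (1 : ℝ) / 2 ^ k x ≤ 2 / Fintype.card Y + 2 / c * P x ^ a := by
      intro x
      have hnn : 0 ≤ 2 / c * P x ^ a := mul_nonneg (by positivity) (Real.rpow_nonneg (hP0 x) _)
      simp only [k]
      split_ifs with h0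
      · linarith
      · have hp : 0 < P x ^ a := Real.rpow_pos_of_pos (lt_of_le_of_ne (hP0 x) (Ne.symm h0)) _
        rcases min_choice K (Nat.log 2 ⌊c / P x ^ a⌋₊) with h | h
        · rw [h]; linarith
        · rw [h]
          have h2 : ⌊c / P x ^ a⌋₊ < 2 ^ (Nat.log 2 ⌊c / P x ^ a⌋₊ + 1) :=
            Nat.lt_pow_succ_log_self (by norm_num) _
          have h3 : c / P x ^ a < 2 ^ (Nat.log 2 ⌊c / P x ^ a⌋₊ + 1) := by
            have := (Nat.floor_lt (by positivity)).1 h2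
            exact_mod_cast this
          have h4 : (1 : ℝ) / 2 ^ (Nat.log 2 ⌊c / P x ^ a⌋₊) ≤ 2 / c * P x ^ a := by
            rw [pow_succ, div_lt_iff₀ hp] at h3
            rw [div_mul_eq_mul_div, div_le_div_iff₀ (by positivity) hcpos]
            linarith
          have : 0 ≤ (2 : ℝ) / Fintype.card Y := by positivity
          linarith
    have h2 := Finset.sum_le_sum fun x (_ : x ∈ Finset.univ) => h1 x
    rw [Finset.sum_add_distrib, ← Finset.mul_sum, ← hSdef] at h2
    have h3 : 2 / c * S = M / 2 := by
      rw [hc]; field_simp; norm_num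
    have h4 : ∑ x : Y, (2 : ℝ) / Fintype.card Y = 2 := by
      simp; field_simp
    rw [h3, h4] at h2
    linarith)
  refine ⟨f, ?_⟩
  have hterm : ∀ x, P x * ((Finset.univ.filter fun y => f y = f x).card : ℝ) ^ ρ ≤
      P x + c ^ ρ * P x ^ a := by
    intro x
    rcases eq_or_lt_of_le (hP0 x) with h0 | h0
    · rw [← h0]
      have : 0 ≤ c ^ ρ * (0 : ℝ) ^ a :=
        mul_nonneg (by positivity) (Real.rpow_nonneg le_rfl _)
      simpa using this
    · have hp : 0 < P x ^ a := Real.rpow_pos_of_pos h0 _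
      have h1 : ((Finset.univ.filter fun y => f y = f x).card : ℝ) ≤ 2 ^ k x := by
        exact_mod_cast hf x
      have h2 : (2 : ℝ) ^ k x ≤ 2 ^ (Nat.log 2 ⌊c / P x ^ a⌋₊) := by
        refine pow_le_pow_right₀ (by norm_num) ?_
        simp only [k, h0.ne', if_false]
        exact min_le_right _ _
      have h3 : ((Finset.univ.filter fun y => f y = f x).card : ℝ) ^ ρ ≤
          1 + (c / P x ^ a) ^ ρ := by
        have hnn : 0 ≤ (c / P x ^ a) ^ ρ := by positivity
        by_cases hfl : ⌊c / P x ^ a⌋₊ = 0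
        · rw [hfl] at h2
          have h5 : ((Finset.univ.filter fun y => f y = f x).card : ℝ) ≤ 1 := by
            simpa using h1.trans h2
          have := Real.rpow_le_one (by positivity) h5 hρ.le
          linarith
        · have h5 : (2 : ℝ) ^ (Nat.log 2 ⌊c / P x ^ a⌋₊) ≤ c / P x ^ a := by
            have h6 : 2 ^ (Nat.log 2 ⌊c / P x ^ a⌋₊) ≤ ⌊c / P x ^ a⌋₊ := Nat.pow_log_le_self 2 hfl
            have h7 := Nat.floor_le (a := c / P x ^ a) (by positivity)
            refine le_trans ?_ h7
            exact_mod_cast h6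
          have := Real.rpow_le_rpow (by positivity) (h1.trans (h2.trans h5)) hρ.le
          linarith
      have h4 : P x * (c / P x ^ a) ^ ρ = c ^ ρ * P x ^ a := by
        rw [Real.div_rpow hcpos.le hp.le, ← Real.rpow_mul h0.le]
        have h5 : P x = P x ^ a * P x ^ (a * ρ) := by
          rw [← Real.rpow_add h0]
          have : a + a * ρ = 1 := by rw [ha]; field_simp
          rw [this, Real.rpow_one]
        have h6 : 0 < P x ^ (a * ρ) := Real.rpow_pos_of_pos h0 _
        rw [mul_div_assoc', div_eq_iff h6.ne']
        nth_rewrite 1 [h5]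
        ring
      calc _ ≤ P x * (1 + (c / P x ^ a) ^ ρ) := mul_le_mul_of_nonneg_left h3 h0.le
        _ = _ := by rw [mul_add, h4, mul_one]
  refine (Finset.sum_le_sum fun x _ => hterm x).trans ?_
  rw [Finset.sum_add_distrib, ← Finset.mul_sum, ← hSdef, hP1]
  have : c ^ ρ * S = (4 / M) ^ ρ * S ^ (1 + ρ) := by
    have : c = 4 / M * S := by rw [hc]; ring
    rw [this, Real.mul_rpow (by positivity) hS.le, Real.rpow_add hS, Real.rpow_one]
    ring
  rw [this]

/-- if `R` exceeds the limsup of the Rényi entropy rate of order `1/(1+ρ)`,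
then there are encoders of rate `R` driving the ρ-th moment of the ratio of performed
tasks to one. -/
theorem tasks_rate_direct {X : Type*} [Fintype X] [Nonempty X]
    (ρ : ℝ) (hρ : 0 < ρ)
    (P : (n : ℕ) → (Fin n → X) → ℝ)
    (hP0 : ∀ n xs, 0 ≤ P n xs) (hP1 : ∀ n, ∑ xs, P n xs = 1)
    (R : ℝ)
    (hR : Filter.limsup (fun n : ℕ => renyiEnt ρ (P n) / (n : ℝ)) Filter.atTop < R) :
    ∃ f : (n : ℕ) → (Fin n → X) → Fin ⌊(2 : ℝ) ^ ((n : ℝ) * R)⌋₊,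
      Filter.Tendsto
        (fun n : ℕ => ∑ xs, P n xs *
          ((Finset.univ.filter fun ys => f n ys = f n xs).card : ℝ) ^ ρ)
        Filter.atTop (nhds 1) := by
  have ha0 : 0 < 1 / (1 + ρ) := by positivity
  have ha1 : 1 / (1 + ρ) ≤ 1 := by rw [div_le_one (by positivity)]; linarith
  have hPle : ∀ n xs, P n xs ≤ 1 := fun n xs => by
    rw [← hP1 n]
    exact Finset.single_le_sum (fun i _ => hP0 n i) (Finset.mem_univ xs)
  have hS1 : ∀ n, 1 ≤ ∑ xs, P n xs ^ (1 / (1 + ρ)) := fun n => by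
    refine (hP1 n).symm.le.trans ?_
    exact Finset.sum_le_sum fun x _ =>
      Real.self_le_rpow_of_le_one (hP0 n x) (hPle n x) ha1
  have hSle : ∀ n, ∑ xs, P n xs ^ (1 / (1 + ρ)) ≤ (Fintype.card X : ℝ) ^ n := fun n => by
    have := Finset.sum_le_sum fun x (_ : x ∈ Finset.univ) =>
      Real.rpow_le_one (hP0 n x) (hPle n x) ha0.le
    simpa using this
  have hH0 : ∀ n, 0 ≤ renyiEnt ρ (P n) := fun n =>
    mul_nonneg (by positivity) (Real.logb_nonneg (by norm_num) (hS1 n))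
  have hbdd : IsBoundedUnder (· ≤ ·) atTop (fun n : ℕ => renyiEnt ρ (P n) / (n : ℝ)) := by
    refine isBoundedUnder_of_eventually_le (a := (1 + ρ) / ρ * Real.logb 2 (Fintype.card X)) ?_
    filter_upwards [eventually_gt_atTop 0] with n hn
    have hn' : (0 : ℝ) < n := by exact_mod_cast hn
    rw [div_le_iff₀ hn', renyiEnt, mul_assoc]
    refine mul_le_mul_of_nonneg_left ?_ (by positivity)
    have := Real.logb_le_logb_of_le (b := 2) (by norm_num)
      (lt_of_lt_of_le one_pos (hS1 n)) (hSle n)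
    rw [Real.logb_pow] at this
    linarith
  obtain ⟨r, hr1, hr2⟩ := exists_between hR
  have hev := eventually_lt_of_limsup_lt hr1 hbdd
  have hr0 : 0 < r := by
    obtain ⟨n, hn⟩ := hev.exists
    exact lt_of_le_of_lt (div_nonneg (hH0 n) (Nat.cast_nonneg n)) hn
  have hRpos : 0 < R := hr0.trans hr2
  have h2pow : ∀ n : ℕ, (1 : ℝ) ≤ 2 ^ ((n : ℝ) * R) := fun n =>
    Real.one_le_rpow (by norm_num) (by positivity)
  have hMpos : ∀ n : ℕ, 0 < ⌊(2 : ℝ) ^ ((n : ℝ) * R)⌋₊ := fun n => Nat.floor_pos.2 (h2pow n)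
  have hMhalf : ∀ n : ℕ, (2 : ℝ) ^ ((n : ℝ) * R) / 2 ≤ (⌊(2 : ℝ) ^ ((n : ℝ) * R)⌋₊ : ℝ) := by
    intro n
    have h1 := Nat.lt_floor_add_one ((2 : ℝ) ^ ((n : ℝ) * R))
    have h2 : (1 : ℝ) ≤ (⌊(2 : ℝ) ^ ((n : ℝ) * R)⌋₊ : ℝ) := by exact_mod_cast hMpos n
    linarith
  have hex : ∀ n : ℕ, ∃ f : (Fin n → X) → Fin ⌊(2 : ℝ) ^ ((n : ℝ) * R)⌋₊,
      ((Nat.log 2 (Fintype.card (Fin n → X)) : ℝ) + 3 ≤ (⌊(2 : ℝ) ^ ((n : ℝ) * R)⌋₊ : ℝ) / 2) →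
      ∑ xs, P n xs * ((Finset.univ.filter fun ys => f ys = f xs).card : ℝ) ^ ρ ≤
        1 + (4 / (⌊(2 : ℝ) ^ ((n : ℝ) * R)⌋₊ : ℝ)) ^ ρ *
          (∑ xs, P n xs ^ ((1 : ℝ) / (1 + ρ))) ^ (1 + ρ) := by
    intro n
    by_cases h : ((Nat.log 2 (Fintype.card (Fin n → X)) : ℝ) + 3 ≤
        (⌊(2 : ℝ) ^ ((n : ℝ) * R)⌋₊ : ℝ) / 2)
    · obtain ⟨f, hf⟩ := one_shot ρ hρ (P n) (hP0 n) (hP1 n) _ (hMpos n)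
        (lt_of_lt_of_le one_pos (hS1 n)) h
      exact ⟨f, fun _ => hf⟩
    · exact ⟨fun _ => ⟨0, hMpos n⟩, fun h' => absurd h' h⟩
  choose f hf using hex
  refine ⟨f, ?_⟩
  have hlarge : ∀ᶠ n : ℕ in atTop, (Nat.log 2 (Fintype.card (Fin n → X)) : ℝ) + 3 ≤
      (⌊(2 : ℝ) ^ ((n : ℝ) * R)⌋₊ : ℝ) / 2 := by
    have hb : (1 : ℝ) < 2 ^ R := Real.one_lt_rpow (by norm_num) hRpos
    have t1 := tendsto_pow_const_div_const_pow_of_one_lt 1 hb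
    have t0 := tendsto_pow_const_div_const_pow_of_one_lt 0 hb
    have t := (t1.const_mul (Fintype.card X : ℝ)).add (t0.const_mul (3 : ℝ))
    simp only [mul_zero, add_zero] at t
    filter_upwards [t.eventually (gt_mem_nhds (show (0 : ℝ) < 1 / 4 by norm_num))] with n hn
    have hpos : (0 : ℝ) < (2 ^ R) ^ n := by positivity
    have hlog : Nat.log 2 (Fintype.card (Fin n → X)) ≤ Fintype.card X * n := by
      have h1 : Fintype.card (Fin n → X) ≤ 2 ^ (Fintype.card X * n) := by
        rw [pow_mul]
        simp only [Fintype.card_fun, Fintype.card_fin]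
        exact Nat.pow_le_pow_left Nat.lt_two_pow_self.le _
      calc _ ≤ Nat.log 2 (2 ^ (Fintype.card X * n)) := Nat.log_mono_right h1
        _ = _ := Nat.log_pow (by norm_num) _
    have hlog' : (Nat.log 2 (Fintype.card (Fin n → X)) : ℝ) ≤ Fintype.card X * n := by
      exact_mod_cast hlog
    have heq : (2 : ℝ) ^ ((n : ℝ) * R) = (2 ^ R) ^ n := by
      rw [mul_comm, Real.rpow_mul (by norm_num), Real.rpow_natCast]
    have hh := hMhalf n
    rw [heq] at hh ⊢
    rw [mul_div_assoc', mul_div_assoc', ← add_div, div_lt_iff₀ hpos] at hn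
    simp only [pow_one, pow_zero] at hn
    linarith
  have hq : Tendsto (fun n : ℕ => 1 + (8 : ℝ) ^ ρ * ((2 : ℝ) ^ (ρ * (r - R))) ^ n) atTop (nhds 1) := by
    have hlt : (2 : ℝ) ^ (ρ * (r - R)) < 1 :=
      Real.rpow_lt_one_of_one_lt_of_neg (by norm_num)
        (mul_neg_of_pos_of_neg hρ (by linarith))
    have := ((tendsto_pow_atTop_nhds_zero_of_lt_one (by positivity) hlt).const_mul
      ((8 : ℝ) ^ ρ)).const_add 1
    simpa using this
  refine tendsto_of_tendsto_of_tendsto_of_le_of_le' tendsto_const_nhds hq ?_ ?_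
  · refine Eventually.of_forall fun n => ?_
    rw [← hP1 n]
    refine Finset.sum_le_sum fun x _ => ?_
    refine le_mul_of_one_le_right (hP0 n x) (Real.one_le_rpow ?_ hρ.le)
    have : 0 < (Finset.univ.filter fun ys => f n ys = f n x).card :=
      Finset.card_pos.2 ⟨x, by simp⟩
    exact_mod_cast this
  · filter_upwards [hlarge, hev, eventually_gt_atTop 0] with n h1 h2 hn
    refine (hf n h1).trans ?_
    have hn' : (0 : ℝ) < n := by exact_mod_cast hn
    have hSpos : 0 < ∑ xs, P n xs ^ ((1 : ℝ) / (1 + ρ)) := lt_of_lt_of_le one_pos (hS1 n)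
    have hSb : (∑ xs, P n xs ^ ((1 : ℝ) / (1 + ρ))) ^ (1 + ρ) ≤ 2 ^ (ρ * (n * r)) := by
      rw [div_lt_iff₀ hn', renyiEnt] at h2
      have h3 : (1 + ρ) * Real.logb 2 (∑ xs, P n xs ^ ((1 : ℝ) / (1 + ρ))) ≤ ρ * (n * r) := by
        rw [div_mul_eq_mul_div, div_lt_iff₀ hρ] at h2
        linarith
      rw [← Real.logb_rpow_eq_mul_logb_of_pos hSpos] at h3
      exact (Real.logb_le_iff_le_rpow (by norm_num) (by positivity)).1 h3
    have hMb : (4 / (⌊(2 : ℝ) ^ ((n : ℝ) * R)⌋₊ : ℝ)) ^ ρ ≤ 8 ^ ρ * 2 ^ (-(ρ * (n * R))) := by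
      have hMp : (0 : ℝ) < (⌊(2 : ℝ) ^ ((n : ℝ) * R)⌋₊ : ℝ) := by exact_mod_cast hMpos n
      have h3 : 4 / (⌊(2 : ℝ) ^ ((n : ℝ) * R)⌋₊ : ℝ) ≤ 8 * 2 ^ (-(n * R)) := by
        rw [Real.rpow_neg (by norm_num), ← div_eq_mul_inv,
          div_le_div_iff₀ hMp (by positivity)]
        linarith [hMhalf n]
      have h4 := Real.rpow_le_rpow (by positivity) h3 hρ.le
      rw [Real.mul_rpow (by norm_num) (by positivity), ← Real.rpow_mul (by norm_num)] at h4
      refine h4.trans (le_of_eq ?_)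
      congr 2
      ring
    have := mul_le_mul hMb hSb (by positivity) (by positivity)
    have heq : (8 : ℝ) ^ ρ * 2 ^ (-(ρ * (n * R))) * 2 ^ (ρ * (n * r)) =
        8 ^ ρ * ((2 : ℝ) ^ (ρ * (r - R))) ^ n := by
      rw [mul_assoc, ← Real.rpow_add (by norm_num), ← Real.rpow_natCast,
        ← Real.rpow_mul (by norm_num)]
      congr 2
      ring
    linarith
end

section
/- Let 𝒳 be a finite nonempty set, let ρ > 0, and let (Pₙ)_{n≥1} be a sequence where Pₙ is a probability mass function on 𝒳ⁿ (the law of the first n symbols X₁,…,Xₙ of a source with alphabet 𝒳). If R < liminf_{n→∞} H_{1/(1+ρ)}(Pₙ)/n, then for every choice of functions fₙ : 𝒳ⁿ → {1,…,⌊2^{nR}⌋}, lim_{n→∞} Σ_{xⁿ∈𝒳ⁿ} Pₙ(xⁿ)·|fₙ⁻¹(fₙ(xⁿ))|^ρ = ∞. -/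
open Filter Real

lemma sum_inv_fiber_le {Y : Type*} [Fintype Y] {M : ℕ} (f : Y → Fin M) :
    ∑ x, (((Finset.univ.filter fun y => f y = f x).card : ℝ))⁻¹ ≤ M := by
  classical
  rw [← Finset.sum_fiberwise Finset.univ f]
  calc _ ≤ ∑ _m : Fin M, (1 : ℝ) := by
        apply Finset.sum_le_sum
        intro m _
        have h : ∀ x ∈ Finset.univ.filter (fun x => f x = m),
            (((Finset.univ.filter fun y => f y = f x).card : ℝ))⁻¹
              = (((Finset.univ.filter fun y => f y = m).card : ℝ))⁻¹ := by
          intro x hx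
          rw [(Finset.mem_filter.1 hx).2]
        rw [Finset.sum_congr rfl h, Finset.sum_const, nsmul_eq_mul]
        exact mul_inv_le_one
    _ = M := by simp

lemma card_fiber_pos {Y : Type*} [Fintype Y] {M : ℕ} (f : Y → Fin M) (x : Y) :
    (1 : ℝ) ≤ ((Finset.univ.filter fun y => f y = f x).card : ℝ) := by
  have : 0 < (Finset.univ.filter fun y => f y = f x).card :=
    Finset.card_pos.2 ⟨x, by simp⟩
  exact_mod_cast this

lemma tasks_holder {Y : Type*} [Fintype Y] {M : ℕ} (f : Y → Fin M) (ρ : ℝ) (hρ : 0 < ρ)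
    (P : Y → ℝ) (hP : ∀ y, 0 ≤ P y) :
    ∑ y, P y ^ ((1 : ℝ) / (1 + ρ)) ≤
      (∑ x, P x * ((Finset.univ.filter fun y => f y = f x).card : ℝ) ^ ρ) ^ ((1 : ℝ) / (1 + ρ))
        * (M : ℝ) ^ (ρ / (1 + ρ)) := by
  have h1 : (0 : ℝ) < 1 + ρ := by linarith
  have hpq : (1 + ρ).HolderConjugate ((1 + ρ) / ρ) := by
    rw [Real.holderConjugate_iff]
    refine ⟨by linarith, ?_⟩
    field_simp
  set L : Y → ℝ := fun x => ((Finset.univ.filter fun y => f y = f x).card : ℝ) with hL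
  have hL1 : ∀ x, 1 ≤ L x := card_fiber_pos f
  have hL0 : ∀ x, 0 < L x := fun x => lt_of_lt_of_le one_pos (hL1 x)
  have key := Real.inner_le_Lp_mul_Lq_of_nonneg Finset.univ hpq
    (f := fun x => (P x * L x ^ ρ) ^ ((1 : ℝ) / (1 + ρ)))
    (g := fun x => (L x)⁻¹ ^ (ρ / (1 + ρ)))
    (fun x _ => Real.rpow_nonneg (mul_nonneg (hP x) (Real.rpow_nonneg (hL0 x).le _)) _)
    (fun x _ => Real.rpow_nonneg (inv_nonneg.2 (hL0 x).le) _)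
  have e1 : ∀ x, (P x * L x ^ ρ) ^ ((1 : ℝ) / (1 + ρ)) * (L x)⁻¹ ^ (ρ / (1 + ρ))
      = P x ^ ((1 : ℝ) / (1 + ρ)) := by
    intro x
    rw [Real.mul_rpow (hP x) (Real.rpow_nonneg (hL0 x).le _), ← Real.rpow_mul (hL0 x).le,
      Real.inv_rpow (hL0 x).le, mul_one_div, mul_assoc, mul_inv_cancel₀, mul_one]
    exact (Real.rpow_pos_of_pos (hL0 x) _).ne'
  have e2 : ∀ x, ((P x * L x ^ ρ) ^ ((1 : ℝ) / (1 + ρ))) ^ (1 + ρ) = P x * L x ^ ρ := by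
    intro x
    rw [← Real.rpow_mul (mul_nonneg (hP x) (Real.rpow_nonneg (hL0 x).le _)),
      one_div_mul_cancel h1.ne', Real.rpow_one]
  have e3 : ∀ x, ((L x)⁻¹ ^ (ρ / (1 + ρ))) ^ ((1 + ρ) / ρ) = (L x)⁻¹ := by
    intro x
    rw [← Real.rpow_mul (inv_nonneg.2 (hL0 x).le)]
    have : ρ / (1 + ρ) * ((1 + ρ) / ρ) = 1 := by field_simp
    rw [this, Real.rpow_one]
  simp only [e1, e2, e3, one_div_div] at key
  refine key.trans ?_
  apply mul_le_mul_of_nonneg_left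
  · apply Real.rpow_le_rpow (Finset.sum_nonneg fun x _ => inv_nonneg.2 (hL0 x).le)
      (sum_inv_fiber_le f) (by positivity)
  · exact Real.rpow_nonneg (Finset.sum_nonneg fun x _ =>
      mul_nonneg (hP x) (Real.rpow_nonneg (hL0 x).le _)) _

lemma one_le_renyi_sum {Y : Type*} [Fintype Y] (ρ : ℝ) (hρ : 0 < ρ)
    (P : Y → ℝ) (hP : ∀ y, 0 ≤ P y) (hP1 : ∑ y, P y = 1) :
    1 ≤ ∑ y, P y ^ ((1 : ℝ) / (1 + ρ)) := by
  have h1 : (0 : ℝ) < 1 + ρ := by linarith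
  refine hP1.symm.le.trans ?_
  apply Finset.sum_le_sum
  intro y _
  have hy : P y ≤ 1 := by
    rw [← hP1]; exact Finset.single_le_sum (fun i _ => hP i) (Finset.mem_univ y)
  rcases (hP y).eq_or_lt with h | h
  · rw [← h]; exact Real.rpow_nonneg le_rfl _
  · calc P y = P y ^ (1 : ℝ) := (Real.rpow_one _).symm
      _ ≤ _ := Real.rpow_le_rpow_of_exponent_ge h hy (by rw [div_le_one h1]; linarith)

lemma tasks_lower {Y : Type*} [Fintype Y] {M : ℕ} (f : Y → Fin M) (ρ : ℝ) (hρ : 0 < ρ)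
    (P : Y → ℝ) (hP : ∀ y, 0 ≤ P y) (hP1 : ∑ y, P y = 1) (r : ℝ) (hM : (M : ℝ) ≤ 2 ^ r) :
    (2 : ℝ) ^ (ρ * (renyiEnt ρ P - r)) ≤
      ∑ x, P x * ((Finset.univ.filter fun y => f y = f x).card : ℝ) ^ ρ := by
  have h1 : (0 : ℝ) < 1 + ρ := by linarith
  have hS := one_le_renyi_sum ρ hρ P hP hP1
  have hH := tasks_holder f ρ hρ P hP
  have hE : 1 ≤ ∑ x, P x * ((Finset.univ.filter fun y => f y = f x).card : ℝ) ^ ρ := by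
    rw [← hP1]
    apply Finset.sum_le_sum
    intro x _
    exact le_mul_of_one_le_right (hP x) (Real.one_le_rpow (card_fiber_pos f x) hρ.le)
  unfold renyiEnt
  set S := ∑ y, P y ^ ((1 : ℝ) / (1 + ρ))
  set E := ∑ x, P x * ((Finset.univ.filter fun y => f y = f x).card : ℝ) ^ ρ
  have hE0 : 0 < E := by linarith
  have hS0 : 0 < S := by linarith
  have hSr : S ≤ E ^ ((1 : ℝ) / (1 + ρ)) * ((2 : ℝ) ^ r) ^ (ρ / (1 + ρ)) := by
    refine hH.trans ?_
    gcongr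
  have hl := Real.logb_le_logb_of_le one_lt_two hS0 hSr
  rw [Real.logb_mul (by positivity) (by positivity), Real.logb_rpow_eq_mul_logb_of_pos hE0,
    Real.logb_rpow_eq_mul_logb_of_pos (by positivity), Real.logb_rpow (by norm_num) (by norm_num)]
    at hl
  rw [← Real.le_logb_iff_rpow_le one_lt_two hE0]
  have h2 := mul_le_mul_of_nonneg_left hl h1.le
  have h3 : (1 + ρ) * (1 / (1 + ρ) * Real.logb 2 E + ρ / (1 + ρ) * r) = Real.logb 2 E + ρ * r := by
    field_simp
  have h4 : ρ * ((1 + ρ) / ρ * Real.logb 2 S - r) = (1 + ρ) * Real.logb 2 S - ρ * r := by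
    field_simp
  rw [h3] at h2
  rw [h4]
  linarith

/-- if `R` is below the liminf of the Rényi entropy rate of order `1/(1+ρ)`,
then for every choice of encoders of rate `R` the ρ-th moment of the ratio of performed
tasks tends to infinity. -/
theorem tasks_rate_converse {X : Type*} [Fintype X] [Nonempty X]
    (ρ : ℝ) (hρ : 0 < ρ)
    (P : (n : ℕ) → (Fin n → X) → ℝ)
    (hP0 : ∀ n xs, 0 ≤ P n xs) (hP1 : ∀ n, ∑ xs, P n xs = 1)
    (R : ℝ)
    (hR : R < Filter.liminf (fun n : ℕ => renyiEnt ρ (P n) / (n : ℝ)) Filter.atTop)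
    (f : (n : ℕ) → (Fin n → X) → Fin ⌊(2 : ℝ) ^ ((n : ℝ) * R)⌋₊) :
    Filter.Tendsto
      (fun n : ℕ => ∑ xs, P n xs *
        ((Finset.univ.filter fun ys => f n ys = f n xs).card : ℝ) ^ ρ)
      Filter.atTop Filter.atTop := by
  have hbdd : Filter.IsBoundedUnder (· ≥ ·) Filter.atTop
      (fun n : ℕ => renyiEnt ρ (P n) / (n : ℝ)) := by
    refine Filter.isBoundedUnder_of ⟨0, fun n => ?_⟩
    have := Real.logb_nonneg one_lt_two (one_le_renyi_sum ρ hρ (P n) (hP0 n) (hP1 n))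
    show 0 ≤ renyiEnt ρ (P n) / (n : ℝ)
    unfold renyiEnt
    positivity
  obtain ⟨c, hRc, hc⟩ := exists_between hR
  have hev := Filter.eventually_lt_of_lt_liminf hc hbdd
  have hlim : Filter.Tendsto (fun n : ℕ => (2 : ℝ) ^ (ρ * (c - R) * (n : ℝ)))
      Filter.atTop Filter.atTop := by
    have hpos : 0 < ρ * (c - R) := mul_pos hρ (by linarith)
    exact (tendsto_rpow_atTop_of_base_gt_one 2 one_lt_two).comp
      (tendsto_natCast_atTop_atTop.const_mul_atTop hpos)
  refine Filter.tendsto_atTop_mono' _ ?_ hlim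
  filter_upwards [hev, Filter.eventually_gt_atTop 0] with n hn hn0
  have hn0' : (0 : ℝ) < n := by exact_mod_cast hn0
  refine le_trans ?_ (tasks_lower (f n) ρ hρ (P n) (hP0 n) (hP1 n) ((n : ℝ) * R)
    (Nat.floor_le (by positivity)))
  apply Real.rpow_le_rpow_of_exponent_le one_le_two
  rw [lt_div_iff₀ hn0'] at hn
  rw [mul_assoc]
  apply mul_le_mul_of_nonneg_left _ hρ.le
  linarith
end

section
/- Let 𝒳 be a finite nonempty set and let λ : 𝒳 → ℕ ∪ {+∞} (ℕ = {1,2,…}) satisfy Σ_{x∈𝒳} 1/λ(x) = μ, with the convention 1/∞ = 0. Then for every real α > 1 there exists a partition of 𝒳 into at most ⌊α·μ + log_α|𝒳| + 2⌋ nonempty subsets such that for every x ∈ 𝒳, the cardinality L(x) of the subset containing x satisfies L(x) ≤ min{λ(x), |𝒳|}. -/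
open scoped ENNReal

open Finset in
theorem kraft_aux {X : Type*} [Fintype X] [DecidableEq X]
    (lam : X → ℕ∞) (hlam : ∀ x, 1 ≤ lam x) (w : X → ℝ)
    (hw : ∀ x, w x = if lam x = ⊤ then (0 : ℝ) else ((lam x).toNat : ℝ)⁻¹)
    (α : ℝ) (hα : 1 < α) (n : ℕ) :
    ∀ (k : ℕ) (S : Finset X) (a : ℝ), S.card = k → S.card ≤ n → 1 ≤ a → a ≤ n →
      (∀ x ∈ S, lam x ≠ ⊤ → a ≤ ((lam x).toNat : ℝ)) →
      ∃ P : Finpartition S,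
        (P.parts.card : ℝ) ≤ α * ∑ x ∈ S, w x + Real.logb α (n / a) + 2 ∧
        ∀ B ∈ P.parts, ∀ x ∈ B, (B.card : ℕ∞) ≤ lam x := by
  intro k
  induction k using Nat.strong_induction_on with
  | _ k ih =>
  intro S a hk hSn ha han hS
  have hw0 : ∀ x, 0 ≤ w x := by
    intro x
    rw [hw]
    split_ifs <;> positivity
  have hsum0 : ∀ T : Finset X, 0 ≤ α * ∑ x ∈ T, w x := fun T =>
    mul_nonneg (by linarith) (Finset.sum_nonneg fun x _ => hw0 x)
  have hlog : 0 ≤ Real.logb α (n / a) := by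
    apply Real.logb_nonneg hα
    rw [le_div_iff₀ (by linarith)]
    linarith
  rcases S.eq_empty_or_nonempty with rfl | hne
  · refine ⟨Finpartition.empty _, ?_, ?_⟩
    · have := hsum0 ∅
      have h0 : (Finpartition.empty (Finset X)).parts.card = 0 := by simp [Finpartition.empty]
      have h1 : ((Finpartition.empty (Finset X)).parts.card : ℝ) = 0 := by exact_mod_cast h0
      refine le_trans (le_of_eq h1) ?_
      linarith
    · intro B hB
      simp [Finpartition.empty] at hB
  by_cases hall : ∀ x ∈ S, (S.card : ℕ∞) ≤ lam x
  · refine ⟨Finpartition.indiscrete hne.ne_empty, ?_, ?_⟩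
    · have := hsum0 S
      simp only [Finpartition.indiscrete_parts, card_singleton, Nat.cast_one]
      linarith
    · intro B hB
      simp only [Finpartition.indiscrete_parts, mem_singleton] at hB
      subst hB
      exact hall
  push Not at hall
  obtain ⟨y, hyS, hy⟩ := hall
  obtain ⟨z, hzS, hz⟩ := S.exists_min_image lam hne
  have hzlt : lam z < S.card := lt_of_le_of_lt (hz y hyS) hy
  obtain ⟨b, hb⟩ := ENat.ne_top_iff_exists.mp (ne_top_of_lt hzlt)
  have hbS : b < S.card := by rw [← hb] at hzlt; exact_mod_cast hzlt
  have hb1 : 1 ≤ b := by have := hlam z; rw [← hb] at this; exact_mod_cast this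
  have hbR : (1 : ℝ) ≤ b := by exact_mod_cast hb1
  have hab : a ≤ b := by
    have := hS z hzS (by rw [← hb]; exact ENat.natCast_ne_top b)
    rw [← hb] at this
    simpa using this
  have hmin : ∀ x ∈ S, (b : ℕ∞) ≤ lam x := by
    intro x hx; rw [hb]; exact hz x hx
  set C := S.filter (fun x => lam x ≠ ⊤ ∧ ((lam x).toNat : ℝ) ≤ α * b) with hC
  have hCS : C ⊆ S := filter_subset _ _
  have hzC : z ∈ C := by
    rw [hC, mem_filter]
    refine ⟨hzS, by rw [← hb]; exact ENat.natCast_ne_top b, ?_⟩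
    rw [← hb]
    simp only [ENat.toNat_natCast]
    nlinarith
  -- combining step
  have comb : ∀ B : Finset X, B ⊆ S → B.Nonempty → B.card ≤ b →
      ∀ P : Finpartition (S \ B), (∀ D ∈ P.parts, ∀ x ∈ D, (D.card : ℕ∞) ≤ lam x) →
      ∃ Q : Finpartition S, Q.parts.card = P.parts.card + 1 ∧
        ∀ D ∈ Q.parts, ∀ x ∈ D, (D.card : ℕ∞) ≤ lam x := by
    intro B hBS hBne hBb P hP
    refine ⟨P.extend (b := B) hBne.ne_empty sdiff_disjoint (by simpa using hBS), ?_, ?_⟩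
    · exact Finpartition.card_extend _ _ _
    · intro D hD x hx
      simp only [Finpartition.extend, mem_insert] at hD
      rcases hD with rfl | hD
      · exact le_trans (by exact_mod_cast hBb) (hmin x (hBS hx))
      · exact hP D hD x hx
  have hcard : ∀ B : Finset X, B ⊆ S → B.Nonempty → (S \ B).card < S.card := by
    intro B hBS hBne
    have := hBne.card_pos
    have := card_sdiff_add_card_eq_card hBS
    omega
  by_cases hCb : b ≤ C.card
  · obtain ⟨B, hBC, hBb⟩ := exists_subset_card_eq hCb
    have hBS := hBC.trans hCS
    have hBne : B.Nonempty := card_pos.mp (by omega)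
    have hlt := hcard B hBS hBne
    obtain ⟨P, hP1, hP2⟩ := ih _ (by omega) (S \ B) a rfl (by omega) ha han
      (fun x hx => hS x (sdiff_subset hx))
    obtain ⟨Q, hQ1, hQ2⟩ := comb B hBS hBne hBb.le P hP2
    refine ⟨Q, ?_, hQ2⟩
    have hs : ∑ x ∈ S \ B, w x + ∑ x ∈ B, w x = ∑ x ∈ S, w x := sum_sdiff hBS
    have hB1 : (B.card : ℝ) * (α * b)⁻¹ ≤ ∑ x ∈ B, w x := by
      rw [← nsmul_eq_mul]
      apply card_nsmul_le_sum
      intro x hx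
      have hxC := hBC hx
      rw [hC, mem_filter] at hxC
      rw [hw, if_neg hxC.2.1]
      apply inv_anti₀ _ hxC.2.2
      have h1 := hS x hxC.1 hxC.2.1
      linarith
    rw [hBb] at hB1
    have h2 : 1 ≤ α * ∑ x ∈ B, w x := by
      calc (1 : ℝ) = α * (b * (α * b)⁻¹) := by field_simp
        _ ≤ _ := mul_le_mul_of_nonneg_left hB1 (by linarith)
    rw [hQ1, ← hs]
    push_cast
    linarith
  · push Not at hCb
    have hCne : C.Nonempty := ⟨z, hzC⟩
    have hlt := hcard C hCS hCne
    have hs : ∑ x ∈ S \ C, w x + ∑ x ∈ C, w x = ∑ x ∈ S, w x := sum_sdiff hCS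
    have hC0 := hsum0 C
    have hgt : ∀ x ∈ S \ C, lam x ≠ ⊤ → α * b ≤ ((lam x).toNat : ℝ) := by
      intro x hx hxt
      rw [mem_sdiff, hC, mem_filter] at hx
      by_contra hcon
      exact hx.2 ⟨hx.1, hxt, by linarith⟩
    by_cases hbn : α * b ≤ n
    · obtain ⟨P, hP1, hP2⟩ := ih _ (by omega) (S \ C) (α * b) rfl (by omega)
        (by nlinarith) hbn hgt
      obtain ⟨Q, hQ1, hQ2⟩ := comb C hCS hCne hCb.le P hP2
      refine ⟨Q, ?_, hQ2⟩
      have hn : (0 : ℝ) < n := by linarith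
      have h3 : Real.logb α (n / (α * b)) + 1 ≤ Real.logb α (n / a) := by
        have : Real.logb α α = 1 := Real.logb_self_eq_one hα
        rw [← this, ← Real.logb_mul (by positivity) (by positivity)]
        apply Real.logb_le_logb_of_le hα (by positivity)
        have : (n : ℝ) / (α * b) * α = n / b := by field_simp
        rw [this]
        gcongr
      rw [hQ1, ← hs]
      push_cast
      linarith
    · push Not at hbn
      have hne' : (S \ C).Nonempty := by
        have := card_sdiff_add_card_eq_card hCS
        exact card_pos.mp (by omega)
      obtain ⟨Q, hQ1, hQ2⟩ := comb C hCS hCne hCb.le (Finpartition.indiscrete hne'.ne_empty) (by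
        intro D hD x hx
        simp only [Finpartition.indiscrete_parts, mem_singleton] at hD
        subst hD
        by_cases hxt : lam x = ⊤
        · rw [hxt]; exact le_top
        · have h1 := hgt x hx hxt
          have h2 : (n : ℝ) < (lam x).toNat := by linarith
          have h3 : n < (lam x).toNat := by exact_mod_cast h2
          rw [← ENat.natCast_toNat hxt]
          have : (S \ C).card ≤ (lam x).toNat := by omega
          exact_mod_cast this)
      refine ⟨Q, ?_, hQ2⟩
      have := hsum0 S
      rw [hQ1]
      simp only [Finpartition.indiscrete_parts, card_singleton]
      push_cast
      linarith

/-- an analog of the Kraft inequality for partitions of finite sets.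
If `∑ x, 1/λ(x) = μ` (with `1/∞ = 0`), then for every `α > 1` there is a partition of `𝒳`
into at most `⌊α μ + log_α |𝒳| + 2⌋` nonempty subsets in which the cardinality of the
subset containing `x` is at most `min (λ x) |𝒳|`. -/
theorem partition_exists_of_kraft {X : Type*} [Fintype X] [Nonempty X]
    (lam : X → ℕ∞) (hlam : ∀ x, 1 ≤ lam x)
    (μ : ℝ)
    (hμ : ∑ x : X, (if lam x = ⊤ then (0 : ℝ) else ((lam x).toNat : ℝ)⁻¹) = μ)
    (α : ℝ) (hα : 1 < α) :
    ∃ (M : ℕ) (ℒ : Fin M → Finset X),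
      (∀ m, (ℒ m).Nonempty) ∧
      (∀ m m', m ≠ m' → Disjoint (ℒ m) (ℒ m')) ∧
      (∀ x : X, ∃ m, x ∈ ℒ m) ∧
      ((M : ℤ) ≤ ⌊α * μ + Real.logb α (Fintype.card X : ℝ) + 2⌋) ∧
      (∀ m, ∀ x ∈ ℒ m, ((ℒ m).card : ℕ∞) ≤ min (lam x) (Fintype.card X : ℕ∞)) := by
  classical
  obtain ⟨P, hP1, hP2⟩ := kraft_aux lam hlam _ (fun _ => rfl) α hα (Fintype.card X) _
    Finset.univ 1 rfl (by simp) le_rfl (by exact_mod_cast Fintype.card_pos) (by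
      intro x _ hx
      have h1 := hlam x
      rw [← ENat.natCast_toNat hx] at h1
      exact_mod_cast h1)
  rw [hμ, div_one] at hP1
  refine ⟨P.parts.card, fun m => (P.parts.equivFin.symm m : Finset X), ?_, ?_, ?_, ?_, ?_⟩
  · intro m
    exact P.nonempty_of_mem_parts (P.parts.equivFin.symm m).2
  · intro m m' hmm
    apply P.disjoint (P.parts.equivFin.symm m).2 (P.parts.equivFin.symm m').2
    intro h
    exact hmm (P.parts.equivFin.symm.injective (Subtype.ext h))
  · intro x
    obtain ⟨B, hB, hx⟩ := P.exists_mem (Finset.mem_univ x)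
    exact ⟨P.parts.equivFin ⟨B, hB⟩, by simpa using hx⟩
  · rw [Int.le_floor]
    exact_mod_cast hP1
  · intro m x hx
    refine le_min (hP2 _ (P.parts.equivFin.symm m).2 x hx) ?_
    exact_mod_cast Finset.card_le_univ _
end

section
/- Let 𝒳 = {a,b,c,d} be a four-element set and define λ(a) = 1, λ(b) = 2, λ(c) = λ(d) = 4, so that Σ_{x∈𝒳} 1/λ(x) = 2. Then there is no partition of 𝒳 into 2 nonempty subsets such that for every x ∈ 𝒳 the cardinality of the subset containing x is at most λ(x); at least 3 subsets are needed. -/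
/-- the counterexample `𝒳 = {a,b,c,d}`, `λ(a)=1`, `λ(b)=2`, `λ(c)=λ(d)=4`
(so that `∑ 1/λ = 2`): there is no partition of `𝒳` into `2` nonempty subsets with the
cardinality of the subset containing `x` at most `λ x`; at least `3` subsets are needed. -/
theorem counterexample_needs_three_parts :
    (¬ ∃ ℒ : Fin 2 → Finset (Fin 4),
        (∀ m, (ℒ m).Nonempty) ∧
        (∀ m m', m ≠ m' → Disjoint (ℒ m) (ℒ m')) ∧
        (∀ x : Fin 4, ∃ m, x ∈ ℒ m) ∧
        (∀ m, ∀ x ∈ ℒ m, (ℒ m).card ≤ ![1, 2, 4, 4] x)) ∧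
    (∀ (M : ℕ) (ℒ : Fin M → Finset (Fin 4)),
        (∀ m, (ℒ m).Nonempty) →
        (∀ m m', m ≠ m' → Disjoint (ℒ m) (ℒ m')) →
        (∀ x : Fin 4, ∃ m, x ∈ ℒ m) →
        (∀ m, ∀ x ∈ ℒ m, (ℒ m).card ≤ ![1, 2, 4, 4] x) →
        3 ≤ M) := by
  have key : ∀ (M : ℕ) (ℒ : Fin M → Finset (Fin 4)),
        (∀ x : Fin 4, ∃ m, x ∈ ℒ m) →
        (∀ m, ∀ x ∈ ℒ m, (ℒ m).card ≤ ![1, 2, 4, 4] x) →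
        3 ≤ M := by
    intro M ℒ hc hl
    by_contra hM
    obtain ⟨p, hp⟩ := hc 0
    obtain ⟨q, hq⟩ := hc 1
    have h0 : (ℒ p).card ≤ 1 := hl p 0 hp
    have h1 : (ℒ q).card ≤ 2 := hl q 1 hq
    have hpq : p ≠ q := by
      intro h
      subst h
      exact absurd (Finset.card_le_one.mp h0 0 hp 1 hq) (by decide)
    have hpq' : p.val ≠ q.val := fun h => hpq (Fin.ext h)
    have hall : (Finset.univ : Finset (Fin 4)) ⊆ ℒ p ∪ ℒ q := by
      intro x _
      obtain ⟨m, hm⟩ := hc x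
      have hmm : m.val = p.val ∨ m.val = q.val := by
        have := m.isLt
        have := p.isLt
        have := q.isLt
        omega
      rcases hmm with h | h
      · rw [Fin.ext h] at hm
        exact Finset.mem_union_left _ hm
      · rw [Fin.ext h] at hm
        exact Finset.mem_union_right _ hm
    have h2 := Finset.card_le_card hall
    have h3 := Finset.card_union_le (ℒ p) (ℒ q)
    have h4 : (Finset.univ : Finset (Fin 4)).card = 4 := by simp
    omega
  refine ⟨?_, fun M ℒ _ _ hc hl => key M ℒ hc hl⟩
  rintro ⟨ℒ, _, _, hc, hl⟩
  have := key 2 ℒ hc hl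
  omega
end

section
/- Let 𝒳 be a finite nonempty set, let P be a probability mass function on 𝒳, let ρ > 0, let M be a positive integer, and let f : 𝒳 → {1,…,M}. If N denotes the number of nonempty sets among the preimages f⁻¹(m) = {x ∈ 𝒳 : f(x) = m}, m = 1,…,M, then Σ_{x∈𝒳} P(x)·|f⁻¹(f(x))|^ρ ≥ 2^{ρ·(H_{1/(1+ρ)}(P) − log₂ N)}. -/
open Filter Real

/-- refined lower bound in terms of the number `N` of nonempty preimages. -/
theorem tasks_lower_bound_nonempty_preimages {X : Type*} [Fintype X] [Nonempty X]
    (P : X → ℝ) (hP0 : ∀ x, 0 ≤ P x) (hP1 : ∑ x, P x = 1)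
    (ρ : ℝ) (hρ : 0 < ρ) (M : ℕ) (hM : 0 < M) (f : X → Fin M)
    (N : ℕ) (hN : N = (Finset.univ.filter fun m : Fin M => ∃ x, f x = m).card) :
    (2 : ℝ) ^ (ρ * (renyiEnt ρ P - Real.logb 2 (N : ℝ))) ≤
      ∑ x, P x * ((Finset.univ.filter fun y => f y = f x).card : ℝ) ^ ρ := by
  set L : X → ℝ := fun x => ((Finset.univ.filter fun y => f y = f x).card : ℝ) with hLdef
  have hL : ∀ x, 0 < L x := by
    intro x
    have : 0 < (Finset.univ.filter fun y => f y = f x).card :=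
      Finset.card_pos.mpr ⟨x, by simp⟩
    exact Nat.cast_pos.mpr this
  set S : ℝ := ∑ y, P y ^ ((1 : ℝ) / (1 + ρ)) with hS
  set T : ℝ := ∑ x, P x * L x ^ ρ with hT
  have hp : (0 : ℝ) < 1 + ρ := by linarith
  have hSpos : 0 < S := by
    have hex : ∃ x, 0 < P x := by
      by_contra hcon
      push Not at hcon
      have : ∑ x, P x ≤ 0 := Finset.sum_nonpos fun x _ => hcon x
      linarith
    obtain ⟨x, hx⟩ := hex
    exact Finset.sum_pos' (fun y _ => Real.rpow_nonneg (hP0 y) _)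
      ⟨x, Finset.mem_univ _, Real.rpow_pos_of_pos hx _⟩
  have hTnn : 0 ≤ T :=
    Finset.sum_nonneg fun x _ => mul_nonneg (hP0 x) (Real.rpow_nonneg (hL x).le _)
  have hNpos : (0 : ℝ) < N := by
    have : 0 < N := by
      rw [hN]
      exact Finset.card_pos.mpr ⟨f (Classical.arbitrary X), by simp⟩
    exact_mod_cast this
  have hw : ∑ x, (L x)⁻¹ = N := by
    rw [← Finset.sum_fiberwise_of_maps_to
      (s := Finset.univ) (t := Finset.univ.filter fun m : Fin M => ∃ x, f x = m) (g := f)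
      (fun x _ => by simp)]
    rw [hN, Finset.cast_card]
    refine Finset.sum_congr rfl fun m hm => ?_
    obtain ⟨x, rfl⟩ := (Finset.mem_filter.mp hm).2
    have h1 : ∀ y ∈ Finset.univ.filter (fun y => f y = f x), (L y)⁻¹ = (L x)⁻¹ := by
      intro y hy
      have hy' : f y = f x := (Finset.mem_filter.mp hy).2
      simp only [hLdef, hy']
    rw [Finset.sum_congr rfl h1, Finset.sum_const, nsmul_eq_mul]
    exact mul_inv_cancel₀ (hL x).ne'
  have key := Real.inner_le_weight_mul_Lp_of_nonneg Finset.univ (p := 1 + ρ) (by linarith)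
    (fun x => (L x)⁻¹) (fun x => P x ^ ((1 : ℝ) / (1 + ρ)) * L x)
    (fun x => (inv_pos.mpr (hL x)).le)
    (fun x => mul_nonneg (Real.rpow_nonneg (hP0 x) _) (hL x).le)
  have e1 : ∑ x, (L x)⁻¹ * (P x ^ ((1 : ℝ) / (1 + ρ)) * L x) = S := by
    refine Finset.sum_congr rfl fun x _ => ?_
    have := (hL x).ne'
    field_simp
  have e2 : ∑ x, (L x)⁻¹ * (P x ^ ((1 : ℝ) / (1 + ρ)) * L x) ^ (1 + ρ) = T := by
    refine Finset.sum_congr rfl fun x _ => ?_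
    rw [Real.mul_rpow (Real.rpow_nonneg (hP0 x) _) (hL x).le, ← Real.rpow_mul (hP0 x),
      one_div_mul_cancel hp.ne', Real.rpow_one, Real.rpow_add (hL x), Real.rpow_one]
    have := (hL x).ne'
    field_simp
  rw [e1, e2, hw] at key
  have key2 : S ^ (1 + ρ) ≤ (N : ℝ) ^ ρ * T := by
    have h := Real.rpow_le_rpow hSpos.le key hp.le
    rw [Real.mul_rpow (Real.rpow_nonneg hNpos.le _) (Real.rpow_nonneg hTnn _),
      ← Real.rpow_mul hNpos.le, ← Real.rpow_mul hTnn, inv_mul_cancel₀ hp.ne', Real.rpow_one] at h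
    have e : (1 - (1 + ρ)⁻¹) * (1 + ρ) = ρ := by
      field_simp
      ring
    rwa [e] at h
  have e3 : ρ * (renyiEnt ρ P - Real.logb 2 (N : ℝ))
      = Real.logb 2 S * (1 + ρ) - Real.logb 2 (N : ℝ) * ρ := by
    unfold renyiEnt
    rw [← hS]
    field_simp
  rw [e3, Real.rpow_sub two_pos, Real.rpow_mul two_pos.le, Real.rpow_mul two_pos.le,
    Real.rpow_logb two_pos (by norm_num) hSpos, Real.rpow_logb two_pos (by norm_num) hNpos,
    div_le_iff₀ (Real.rpow_pos_of_pos hNpos _), mul_comm]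
  exact key2
end

section
/- Let P and Q be probability mass functions on a finite set 𝒳, let α > 0 with α ≠ 1, and let Pⁿ and Qⁿ denote the n-fold product distributions on 𝒳ⁿ. Then Δ_α(Pⁿ‖Qⁿ) = n·Δ_α(P‖Q). -/
open scoped ENNReal

/-- Sundaresan's divergence `Δ_α(P‖Q)` (base-2 logarithm), valued in `EReal` so as to
accommodate the conventions `0/0 = 0` and `a/0 = +∞` for `a > 0`. -/
noncomputable def sundaresan {Y : Type*} [Fintype Y] (α : ℝ) (P Q : Y → ℝ) : EReal :=
  let Z : ℝ≥0∞ :=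
    ENNReal.ofReal (∑ y, Q y ^ α) *
      (∑ y, ENNReal.ofReal (P y) / ENNReal.ofReal (Q y) ^ (1 - α)) ^ (α / (1 - α)) /
      ENNReal.ofReal (∑ y, P y ^ α) ^ ((1 : ℝ) / (1 - α))
  if Z = ⊤ then ⊤ else ((Real.logb 2 Z.toReal : ℝ) : EReal)

theorem sund_term (α : ℝ) {n : ℕ} (p q : Fin n → ℝ) (hp : ∀ i, 0 ≤ p i) (hq : ∀ i, 0 ≤ q i) :
    ENNReal.ofReal (∏ i, p i) / ENNReal.ofReal (∏ i, q i) ^ (1 - α) =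
      ∏ i, (ENNReal.ofReal (p i) / ENNReal.ofReal (q i) ^ (1 - α)) := by
  induction n with
  | zero => simp
  | succ n ih =>
    rw [Fin.prod_univ_succ, Fin.prod_univ_succ, Fin.prod_univ_succ,
      ← ih _ _ (fun i => hp i.succ) (fun i => hq i.succ),
      ENNReal.ofReal_mul (hp 0), ENNReal.ofReal_mul (hq 0),
      ENNReal.mul_rpow_of_ne_top ENNReal.ofReal_ne_top ENNReal.ofReal_ne_top,
      div_eq_mul_inv, div_eq_mul_inv, div_eq_mul_inv]
    rw [ENNReal.mul_inv, mul_mul_mul_comm]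
    · rcases le_total α 1 with h | h
      · right
        exact ENNReal.rpow_ne_top_of_nonneg (by linarith) ENNReal.ofReal_ne_top
      · left
        simp only [ne_eq, ENNReal.rpow_eq_zero_iff, ENNReal.ofReal_ne_top, false_and, or_false]
        rintro ⟨_, h2⟩
        linarith
    · rcases le_total α 1 with h | h
      · left
        exact ENNReal.rpow_ne_top_of_nonneg (by linarith) ENNReal.ofReal_ne_top
      · right
        simp only [ne_eq, ENNReal.rpow_eq_zero_iff, ENNReal.ofReal_ne_top, false_and, or_false]
        rintro ⟨_, h2⟩
        linarith

theorem sund_sum {X : Type*} [Fintype X] (α : ℝ) (n : ℕ) (Q : X → ℝ) (hQ0 : ∀ x, 0 ≤ Q x) :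
    ENNReal.ofReal (∑ xs : Fin n → X, (∏ i, Q (xs i)) ^ α) =
      ENNReal.ofReal (∑ x, Q x ^ α) ^ n := by
  rw [← ENNReal.ofReal_pow (Finset.sum_nonneg fun x _ => Real.rpow_nonneg (hQ0 x) α),
    Fintype.sum_pow]
  congr 1
  refine Finset.sum_congr rfl fun xs _ => ?_
  rw [Real.finsetProd_rpow _ _ fun i _ => hQ0 _]

/-- the Sundaresan divergence is additive over products:
`Δ_α(Pⁿ‖Qⁿ) = n Δ_α(P‖Q)`. -/
theorem sundaresan_product {X : Type*} [Fintype X]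
    (P Q : X → ℝ) (hP0 : ∀ x, 0 ≤ P x) (hP1 : ∑ x, P x = 1)
    (hQ0 : ∀ x, 0 ≤ Q x) (hQ1 : ∑ x, Q x = 1)
    (α : ℝ) (hα : 0 < α) (hα1 : α ≠ 1) (n : ℕ) :
    sundaresan α (fun xs : Fin n → X => ∏ i, P (xs i))
        (fun xs : Fin n → X => ∏ i, Q (xs i)) =
      ((n : ℝ) : EReal) * sundaresan α P Q := by
  have hS : (∑ xs : Fin n → X, ENNReal.ofReal (∏ i, P (xs i)) /
        ENNReal.ofReal (∏ i, Q (xs i)) ^ (1 - α)) =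
      (∑ y, ENNReal.ofReal (P y) / ENNReal.ofReal (Q y) ^ (1 - α)) ^ n := by
    rw [Fintype.sum_pow]
    exact Finset.sum_congr rfl fun xs _ => sund_term α _ _ (fun _ => hP0 _) (fun _ => hQ0 _)
  have hcomm : ∀ (a : ℝ≥0∞) (c : ℝ), (a ^ n) ^ c = (a ^ c) ^ n := fun a c => by
    rw [← ENNReal.rpow_natCast, ← ENNReal.rpow_natCast, ← ENNReal.rpow_mul,
      ← ENNReal.rpow_mul, mul_comm]
  unfold sundaresan
  simp only []
  rw [hS, sund_sum α n P hP0, sund_sum α n Q hQ0, hcomm, hcomm, ← mul_pow, div_eq_mul_inv,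
    ENNReal.inv_pow, ← mul_pow, ← div_eq_mul_inv]
  generalize ENNReal.ofReal (∑ y, Q y ^ α) *
      (∑ y, ENNReal.ofReal (P y) / ENNReal.ofReal (Q y) ^ (1 - α)) ^ (α / (1 - α)) /
      ENNReal.ofReal (∑ y, P y ^ α) ^ ((1 : ℝ) / (1 - α)) = Z
  rcases Nat.eq_zero_or_pos n with rfl | hn
  · simp
  · by_cases hZ : Z = ⊤
    · subst hZ
      rw [ENNReal.top_pow hn.ne', if_pos rfl,
        EReal.coe_mul_top_of_pos (by exact_mod_cast hn)]
    · rw [if_neg hZ, if_neg (ENNReal.pow_ne_top hZ), ENNReal.toReal_pow, Real.logb_pow,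
        EReal.coe_mul]
end

section
/- Let P and Q be probability mass functions on a finite set 𝒳 and let α > 0 with α ≠ 1. Then Δ_α(P‖Q) ≥ 0, with equality if and only if P = Q. -/
open scoped ENNReal

/-- Weighted AM-GM for two numbers together with the equality case. -/
lemma amgm_two (t : ℝ) (ht0 : 0 < t) (ht1 : t < 1) (a b : ℝ) (ha : 0 ≤ a) (hb : 0 ≤ b) :
    a ^ t * b ^ (1 - t) ≤ t * a + (1 - t) * b ∧
      (a ^ t * b ^ (1 - t) = t * a + (1 - t) * b → a = b) := by
  refine ⟨Real.geom_mean_le_arith_mean2_weighted ht0.le (by linarith) ha hb (by ring), ?_⟩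
  intro h
  have h1t : 0 < 1 - t := by linarith
  rcases ha.eq_or_lt with rfl | ha
  · rw [Real.zero_rpow ht0.ne'] at h
    nlinarith
  rcases hb.eq_or_lt with rfl | hb
  · rw [Real.zero_rpow h1t.ne'] at h
    nlinarith
  by_contra hne
  have hl : Real.log a ≠ Real.log b := fun hh => hne (Real.log_injOn_pos ha hb hh)
  have := strictConvexOn_exp.2 (Set.mem_univ (Real.log a)) (Set.mem_univ (Real.log b)) hl ht0 h1t
    (by ring)
  simp only [smul_eq_mul, Real.exp_log ha, Real.exp_log hb, Real.exp_add] at this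
  rw [mul_comm t, mul_comm (1 - t) (Real.log b), ← Real.rpow_def_of_pos ha,
    ← Real.rpow_def_of_pos hb] at this
  linarith

/-- Hölder for probability vectors with the equality case. -/
lemma holder_prob {X : Type*} [Fintype X] (t : ℝ) (ht0 : 0 < t) (ht1 : t < 1)
    (u v : X → ℝ) (hu : ∀ x, 0 ≤ u x) (hv : ∀ x, 0 ≤ v x)
    (hu1 : ∑ x, u x = 1) (hv1 : ∑ x, v x = 1) :
    ∑ x, u x ^ t * v x ^ (1 - t) ≤ 1 ∧ (∑ x, u x ^ t * v x ^ (1 - t) = 1 ↔ u = v) := by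
  have hs : ∑ x, (t * u x + (1 - t) * v x) = 1 := by
    rw [Finset.sum_add_distrib, ← Finset.mul_sum, ← Finset.mul_sum, hu1, hv1]; ring
  have hle : ∀ x ∈ Finset.univ, u x ^ t * v x ^ (1 - t) ≤ t * u x + (1 - t) * v x :=
    fun x _ => (amgm_two t ht0 ht1 _ _ (hu x) (hv x)).1
  refine ⟨(Finset.sum_le_sum hle).trans hs.le, ?_, ?_⟩
  · intro h
    replace h := (Finset.sum_eq_sum_iff_of_le hle).1 (h.trans hs.symm)
    funext x
    exact (amgm_two t ht0 ht1 _ _ (hu x) (hv x)).2 (h x (Finset.mem_univ x))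
  · rintro rfl
    refine Eq.trans (Finset.sum_congr rfl fun x _ => ?_) hu1
    rw [← Real.rpow_add' (hu x) (by simp)]
    simp

lemma sum_rpow_pos {X : Type*} [Fintype X] (P : X → ℝ) (hP0 : ∀ x, 0 ≤ P x)
    (hP1 : ∑ x, P x = 1) (α : ℝ) : 0 < ∑ x, P x ^ α := by
  obtain ⟨x, hx⟩ : ∃ x, 0 < P x := by
    by_contra! h
    have : ∑ x, P x ≤ 0 := Finset.sum_nonpos fun x _ => h x
    linarith
  exact Finset.sum_pos' (fun x _ => Real.rpow_nonneg (hP0 x) _)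
    ⟨x, Finset.mem_univ x, Real.rpow_pos_of_pos hx _⟩

/-- Proportional probability vectors are equal. -/
lemma eq_of_prop {X : Type*} [Fintype X] (P Q : X → ℝ) (hP1 : ∑ x, P x = 1)
    (hQ1 : ∑ x, Q x = 1) (c : ℝ) (h : ∀ x, P x = c * Q x) : P = Q := by
  have hc : c = 1 := by
    have : ∑ x, P x = ∑ x, c * Q x := Finset.sum_congr rfl fun x _ => h x
    rw [← Finset.mul_sum, hP1, hQ1] at this
    linarith
  funext x
  rw [h x, hc, one_mul]

/-- From a log identity to the conclusion. -/
lemma finish_aux (Z : ℝ≥0∞) (z w c : ℝ) (p : Prop) (hZ : Z = ENNReal.ofReal z) (hz : 0 < z)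
    (hw : 0 < w) (hc : c < 0) (hlog : Real.log z = c * Real.log w) (hw1 : w ≤ 1)
    (hwp : w = 1 ↔ p) :
    0 ≤ (if Z = ⊤ then (⊤ : EReal) else ((Real.logb 2 Z.toReal : ℝ) : EReal)) ∧
    ((if Z = ⊤ then (⊤ : EReal) else ((Real.logb 2 Z.toReal : ℝ) : EReal)) = 0 ↔ p) := by
  subst hZ
  have hl2 : 0 < Real.log 2 := Real.log_pos (by norm_num)
  have hlw : Real.log w ≤ 0 := Real.log_nonpos hw.le hw1
  rw [if_neg ENNReal.ofReal_ne_top, ENNReal.toReal_ofReal hz.le, Real.logb, hlog]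
  constructor
  · rw [EReal.coe_nonneg]
    exact div_nonneg (by nlinarith) hl2.le
  · rw [EReal.coe_eq_zero, div_eq_zero_iff, ← hwp]
    constructor
    · rintro (h | h)
      · rcases mul_eq_zero.1 h with h | h
        · linarith
        · exact Real.eq_one_of_pos_of_log_eq_zero hw h
      · linarith
    · rintro rfl
      simp

/-- `Δ_α(P‖Q) ≥ 0`, with equality iff `P = Q`. -/
theorem sundaresan_nonneg_eq_zero_iff {X : Type*} [Fintype X]
    (P Q : X → ℝ) (hP0 : ∀ x, 0 ≤ P x) (hP1 : ∑ x, P x = 1)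
    (hQ0 : ∀ x, 0 ≤ Q x) (hQ1 : ∑ x, Q x = 1)
    (α : ℝ) (hα : 0 < α) (hα1 : α ≠ 1) :
    0 ≤ sundaresan α P Q ∧ (sundaresan α P Q = 0 ↔ P = Q) := by
  have hA := sum_rpow_pos Q hQ0 hQ1 α
  have hB := sum_rpow_pos P hP0 hP1 α
  have hPQA : P = Q → ∑ x, P x ^ α = ∑ x, Q x ^ α := by rintro rfl; rfl
  unfold sundaresan
  set A := ∑ x, Q x ^ α with hAdef
  set B := ∑ x, P x ^ α with hBdef
  -- the infinite case
  have top_case : (∑ y, ENNReal.ofReal (P y) / ENNReal.ofReal (Q y) ^ (1 - α)) ^ (α / (1 - α)) = ⊤ →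
      P ≠ Q → _ := fun h hne => (show
      0 ≤ (let Z : ℝ≥0∞ := ENNReal.ofReal A *
      (∑ y, ENNReal.ofReal (P y) / ENNReal.ofReal (Q y) ^ (1 - α)) ^ (α / (1 - α)) /
      ENNReal.ofReal B ^ ((1 : ℝ) / (1 - α)); if Z = ⊤ then (⊤ : EReal) else ((Real.logb 2 Z.toReal : ℝ) : EReal)) ∧
      ((let Z : ℝ≥0∞ := ENNReal.ofReal A *
      (∑ y, ENNReal.ofReal (P y) / ENNReal.ofReal (Q y) ^ (1 - α)) ^ (α / (1 - α)) /
      ENNReal.ofReal B ^ ((1 : ℝ) / (1 - α)); if Z = ⊤ then (⊤ : EReal) else ((Real.logb 2 Z.toReal : ℝ) : EReal)) = 0 ↔ P = Q) from by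
    have hZ : ENNReal.ofReal A *
      (∑ y, ENNReal.ofReal (P y) / ENNReal.ofReal (Q y) ^ (1 - α)) ^ (α / (1 - α)) /
      ENNReal.ofReal B ^ ((1 : ℝ) / (1 - α)) = ⊤ := by
      rw [h, ENNReal.mul_top (by simpa using hA), ENNReal.ofReal_rpow_of_pos hB]
      exact ENNReal.top_div_of_ne_top ENNReal.ofReal_ne_top
    simp only [hZ, if_true]
    exact ⟨le_top, by simp [hne]⟩)
  -- the sum in the finite case
  have real_Z : ∀ S : ℝ, 0 < S →
      (∑ y, ENNReal.ofReal (P y) / ENNReal.ofReal (Q y) ^ (1 - α)) = ENNReal.ofReal S →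
      ENNReal.ofReal A *
      (∑ y, ENNReal.ofReal (P y) / ENNReal.ofReal (Q y) ^ (1 - α)) ^ (α / (1 - α)) /
      ENNReal.ofReal B ^ ((1 : ℝ) / (1 - α)) =
      ENNReal.ofReal (A * S ^ (α / (1 - α)) / B ^ ((1 : ℝ) / (1 - α))) := by
    intro S hS h
    rw [h, ENNReal.ofReal_rpow_of_pos hS, ENNReal.ofReal_rpow_of_pos hB,
      ← ENNReal.ofReal_mul hA.le, ← ENNReal.ofReal_div_of_pos (Real.rpow_pos_of_pos hB _)]
  have log_Z : ∀ S : ℝ, 0 < S → Real.log (A * S ^ (α / (1 - α)) / B ^ ((1 : ℝ) / (1 - α))) =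
      Real.log A + α / (1 - α) * Real.log S - 1 / (1 - α) * Real.log B := by
    intro S hS
    have h1 := Real.rpow_pos_of_pos hS (α / (1 - α))
    have h2 := Real.rpow_pos_of_pos hB (1 / (1 - α))
    rw [Real.log_div (by positivity) h2.ne', Real.log_mul hA.ne' h1.ne', Real.log_rpow hS,
      Real.log_rpow hB]
  have z_pos : ∀ S : ℝ, 0 < S → 0 < A * S ^ (α / (1 - α)) / B ^ ((1 : ℝ) / (1 - α)) := by
    intro S hS
    have h1 := Real.rpow_pos_of_pos hS (α / (1 - α))
    have h2 := Real.rpow_pos_of_pos hB (1 / (1 - α))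
    positivity
  have hvsum : ∑ x, Q x ^ α / A = 1 := by rw [← Finset.sum_div, div_self hA.ne']
  have hv0 : ∀ x, 0 ≤ Q x ^ α / A := fun x => div_nonneg (Real.rpow_nonneg (hQ0 x) _) hA.le
  set S : ℝ := ∑ x, P x * Q x ^ (α - 1) with hSdef
  have hS0 : 0 ≤ S := Finset.sum_nonneg fun x _ => mul_nonneg (hP0 x) (Real.rpow_nonneg (hQ0 x) _)
  have hterm : ∀ x, 0 < Q x → ENNReal.ofReal (P x) / ENNReal.ofReal (Q x) ^ (1 - α) =
      ENNReal.ofReal (P x * Q x ^ (α - 1)) := by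
    intro x hx
    rw [ENNReal.ofReal_rpow_of_pos hx, ← ENNReal.ofReal_div_of_pos (Real.rpow_pos_of_pos hx _),
      div_eq_mul_inv, ← Real.rpow_neg hx.le, neg_sub]
  have hEsum : (∀ x, ENNReal.ofReal (P x) / ENNReal.ofReal (Q x) ^ (1 - α) =
      ENNReal.ofReal (P x * Q x ^ (α - 1))) →
      (∑ y, ENNReal.ofReal (P y) / ENNReal.ofReal (Q y) ^ (1 - α)) = ENNReal.ofReal S := by
    intro h
    rw [hSdef, ENNReal.ofReal_sum_of_nonneg
      fun x _ => mul_nonneg (hP0 x) (Real.rpow_nonneg (hQ0 x) _)]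
    exact Finset.sum_congr rfl fun x _ => h x
  have hQQ : ∀ x, Q x * Q x ^ (α - 1) = Q x ^ α := by
    intro x
    rcases (hQ0 x).eq_or_lt with hq | hq
    · rw [← hq, zero_mul, Real.zero_rpow hα.ne']
    · rw [← Real.rpow_one_add' hq.le (by linarith)]; congr 1; ring
  have hSA : P = Q → S = A := by
    rintro rfl
    exact Finset.sum_congr rfl fun x _ => hQQ x
  rcases lt_or_gt_of_ne hα1 with hlt | hgt
  · have h1α : 0 < 1 - α := by linarith
    by_cases hsupp : ∀ x, Q x = 0 → P x = 0
    · have hES := hEsum (by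
        intro x
        rcases (hQ0 x).eq_or_lt with hq | hq
        · rw [← hq, hsupp x hq.symm]; simp
        · exact hterm x hq)
      have hS : 0 < S := by
        refine hS0.lt_of_ne fun h => ?_
        have h0 := (Finset.sum_eq_zero_iff_of_nonneg fun x _ =>
          mul_nonneg (hP0 x) (Real.rpow_nonneg (hQ0 x) _)).1 h.symm
        have : ∑ x, P x = 0 := by
          refine Finset.sum_eq_zero fun x hx => ?_
          rcases (hQ0 x).eq_or_lt with hq | hq
          · exact hsupp x hq.symm
          · exact (mul_eq_zero.1 (h0 x hx)).resolve_right (Real.rpow_pos_of_pos hq _).ne'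
        linarith
      have hu0 : ∀ x, 0 ≤ P x * Q x ^ (α - 1) / S := fun x =>
        div_nonneg (mul_nonneg (hP0 x) (Real.rpow_nonneg (hQ0 x) _)) hS.le
      have hH := holder_prob α hα hlt (fun x => P x * Q x ^ (α - 1) / S) (fun x => Q x ^ α / A)
        hu0 hv0 (by rw [← Finset.sum_div, div_self hS.ne']) hvsum
      have hSα := Real.rpow_pos_of_pos hS α
      have hAα := Real.rpow_pos_of_pos hA (1 - α)
      have hw : ∑ x, (P x * Q x ^ (α - 1) / S) ^ α * (Q x ^ α / A) ^ (1 - α) =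
          B / (S ^ α * A ^ (1 - α)) := by
        rw [hBdef, Finset.sum_div]
        refine Finset.sum_congr rfl fun x _ => ?_
        rw [Real.div_rpow (mul_nonneg (hP0 x) (Real.rpow_nonneg (hQ0 x) _)) hS.le,
          Real.div_rpow (Real.rpow_nonneg (hQ0 x) _) hA.le, div_mul_div_comm]
        congr 1
        rcases (hQ0 x).eq_or_lt with hq | hq
        · rw [hsupp x hq.symm]; simp [Real.zero_rpow hα.ne']
        · rw [Real.mul_rpow (hP0 x) (Real.rpow_nonneg hq.le _), ← Real.rpow_mul hq.le,
            ← Real.rpow_mul hq.le, mul_assoc, ← Real.rpow_add hq]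
          rw [show (α - 1) * α + α * (1 - α) = 0 by ring, Real.rpow_zero, mul_one]
      rw [hw] at hH
      refine finish_aux _ _ (B / (S ^ α * A ^ (1 - α))) (-(1 / (1 - α))) _ (real_Z S hS hES)
        (z_pos S hS) (by positivity) (by simpa using h1α) ?_ hH.1 (hH.2.trans ⟨?_, ?_⟩)
      · rw [log_Z S hS, Real.log_div hB.ne' (by positivity), Real.log_mul hSα.ne' hAα.ne',
          Real.log_rpow hS, Real.log_rpow hA]
        field_simp
        ring
      · intro h
        refine eq_of_prop P Q hP1 hQ1 (S / A) fun x => ?_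
        rcases (hQ0 x).eq_or_lt with hq | hq
        · rw [hsupp x hq.symm, ← hq, mul_zero]
        · have hx := congrFun h x
          rw [← hQQ x] at hx
          have := Real.rpow_pos_of_pos hq (α - 1)
          field_simp at hx ⊢
          linarith
      · intro h
        funext x
        rw [hSA h, h, hQQ]
    · push Not at hsupp
      obtain ⟨x, hx, hpx⟩ := hsupp
      have hpos : 0 < P x := (hP0 x).lt_of_ne hpx.symm
      refine top_case ?_ (fun h => hpx (by rw [h, hx]))
      have : (∑ y, ENNReal.ofReal (P y) / ENNReal.ofReal (Q y) ^ (1 - α)) = ⊤ := by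
        refine ENNReal.sum_eq_top.2 ⟨x, Finset.mem_univ x, ?_⟩
        rw [hx, ENNReal.ofReal_zero, ENNReal.zero_rpow_of_pos h1α]
        exact ENNReal.div_zero (by simpa using hpos)
      rw [this, ENNReal.top_rpow_of_pos (by positivity)]
  · have h1α : 1 - α < 0 := by linarith
    have hES := hEsum (by
      intro x
      rcases (hQ0 x).eq_or_lt with hq | hq
      · rw [← hq, ENNReal.ofReal_zero, ENNReal.zero_rpow_of_neg h1α,
          Real.zero_rpow (by linarith)]
        simp
      · exact hterm x hq)
    rcases hS0.eq_or_lt with hS | hS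
    · refine top_case ?_ (fun h => ?_)
      · rw [hES, ← hS, ENNReal.ofReal_zero,
          ENNReal.zero_rpow_of_neg (div_neg_of_pos_of_neg hα h1α)]
      · have := hSA h
        linarith
    · have hinv : α⁻¹ < 1 := inv_lt_one_of_one_lt₀ hgt
      have hu0 : ∀ x, 0 ≤ P x ^ α / B := fun x => div_nonneg (Real.rpow_nonneg (hP0 x) _) hB.le
      have hH := holder_prob α⁻¹ (inv_pos.2 hα) hinv (fun x => P x ^ α / B) (fun x => Q x ^ α / A)
        hu0 hv0 (by rw [← Finset.sum_div, div_self hB.ne']) hvsum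
      have hBα := Real.rpow_pos_of_pos hB α⁻¹
      have hAα := Real.rpow_pos_of_pos hA (1 - α⁻¹)
      have hw : ∑ x, (P x ^ α / B) ^ α⁻¹ * (Q x ^ α / A) ^ (1 - α⁻¹) =
          S / (B ^ α⁻¹ * A ^ (1 - α⁻¹)) := by
        rw [hSdef, Finset.sum_div]
        refine Finset.sum_congr rfl fun x _ => ?_
        rw [Real.div_rpow (Real.rpow_nonneg (hP0 x) _) hB.le,
          Real.div_rpow (Real.rpow_nonneg (hQ0 x) _) hA.le, div_mul_div_comm,
          ← Real.rpow_mul (hP0 x), ← Real.rpow_mul (hQ0 x), mul_inv_cancel₀ hα.ne', Real.rpow_one,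
          mul_sub, mul_inv_cancel₀ hα.ne', mul_one]
      rw [hw] at hH
      refine finish_aux _ _ (S / (B ^ α⁻¹ * A ^ (1 - α⁻¹))) (α / (1 - α)) _ (real_Z S hS hES)
        (z_pos S hS) (by positivity) (div_neg_of_pos_of_neg hα h1α) ?_ hH.1 (hH.2.trans ⟨?_, ?_⟩)
      · rw [log_Z S hS, Real.log_div hS.ne' (by positivity), Real.log_mul hBα.ne' hAα.ne',
          Real.log_rpow hB, Real.log_rpow hA]
        have := h1α.ne
        field_simp
        ring
      · intro h
        refine eq_of_prop P Q hP1 hQ1 ((B / A) ^ α⁻¹) fun x => ?_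
        have hx := congrFun h x
        have hx2 : P x ^ α = B / A * Q x ^ α := by
          field_simp at hx ⊢
          linarith
        rw [← Real.rpow_rpow_inv (hP0 x) hα.ne', hx2,
          Real.mul_rpow (by positivity) (Real.rpow_nonneg (hQ0 x) _),
          Real.rpow_rpow_inv (hQ0 x) hα.ne']
      · intro h
        funext x
        rw [hPQA h, h]
end

section
/- Let P and Q be probability mass functions on a finite set 𝒳 with supp(P) ⊆ supp(Q). Then lim_{α→1} Δ_α(P‖Q) = D(P‖Q), where D(P‖Q) = Σ_{x: P(x)>0} P(x)·log₂(P(x)/Q(x)) is the Kullback–Leibler divergence. -/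
open scoped ENNReal
open Filter

noncomputable def sdT {X : Type*} [Fintype X] (P R : X → ℝ) (a : ℝ) : ℝ :=
  ∑ x, P x * R x ^ (a - 1)

lemma sdT_pos {X : Type*} [Fintype X] (P R : X → ℝ) (hP0 : ∀ x, 0 ≤ P x)
    (hP1 : ∑ x, P x = 1) (h : ∀ x, 0 < P x → 0 < R x) (a : ℝ) : 0 < sdT P R a := by
  have hnn : ∀ x, 0 ≤ P x * R x ^ (a - 1) := by
    intro x
    rcases (hP0 x).eq_or_lt with h0 | h0
    · simp [← h0]
    · have := h x h0
      positivity
  have : ∃ x, 0 < P x := by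
    by_contra hc
    push Not at hc
    have : ∑ x, P x ≤ 0 := Finset.sum_nonpos (fun x _ => hc x)
    linarith
  obtain ⟨x, hx⟩ := this
  refine Finset.sum_pos' (fun x _ => hnn x) ⟨x, Finset.mem_univ x, ?_⟩
  have := h x hx
  positivity

lemma sdT_deriv {X : Type*} [Fintype X] (P R : X → ℝ) (hP0 : ∀ x, 0 ≤ P x)
    (h : ∀ x, 0 < P x → 0 < R x) :
    HasDerivAt (sdT P R) (∑ x, P x * Real.log (R x)) 1 := by
  unfold sdT
  apply HasDerivAt.fun_sum
  intro x _
  rcases (hP0 x).eq_or_lt with h0 | h0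
  · simp only [← h0, zero_mul]
    exact hasDerivAt_const _ _
  · have h1 := (((hasDerivAt_id (1:ℝ)).sub_const 1).const_rpow (h x h0)).const_mul (P x)
    simpa using h1

lemma sdT_log {X : Type*} [Fintype X] (P R : X → ℝ) (hP0 : ∀ x, 0 ≤ P x)
    (hP1 : ∑ x, P x = 1) (h : ∀ x, 0 < P x → 0 < R x) :
    HasDerivAt (fun a => Real.log (sdT P R a)) (∑ x, P x * Real.log (R x)) 1 := by
  have h1 := (sdT_deriv P R hP0 h).log (sdT_pos P R hP0 hP1 h 1).ne'
  have : sdT P R 1 = 1 := by simp [sdT, hP1]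
  simpa [this] using h1

lemma sdT_slope {X : Type*} [Fintype X] (P R : X → ℝ) (hP0 : ∀ x, 0 ≤ P x)
    (hP1 : ∑ x, P x = 1) (h : ∀ x, 0 < P x → 0 < R x) :
    Tendsto (fun a => (a - 1)⁻¹ * Real.log (sdT P R a)) (nhdsWithin 1 {1}ᶜ)
      (nhds (∑ x, P x * Real.log (R x))) := by
  have h1 := hasDerivAt_iff_tendsto_slope.1 (sdT_log P R hP0 hP1 h)
  have h2 : sdT P R 1 = 1 := by simp [sdT, hP1]
  refine h1.congr (fun a => ?_)
  simp [slope, h2]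

lemma sdT_self {X : Type*} [Fintype X] (P : X → ℝ) (hP0 : ∀ x, 0 ≤ P x) (a : ℝ) (ha : a ≠ 0) :
    ∑ x, P x ^ a = sdT P P a := by
  unfold sdT
  refine Finset.sum_congr rfl (fun x _ => ?_)
  rcases (hP0 x).eq_or_lt with h0 | h0
  · simp [← h0, Real.zero_rpow ha]
  · rw [Real.rpow_sub_one h0.ne']
    field_simp

lemma sdT_ennreal {X : Type*} [Fintype X] (P Q : X → ℝ) (hP0 : ∀ x, 0 ≤ P x)
    (h : ∀ x, 0 < P x → 0 < Q x) (a : ℝ) :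
    ∑ y, ENNReal.ofReal (P y) / ENNReal.ofReal (Q y) ^ (1 - a) = ENNReal.ofReal (sdT P Q a) := by
  unfold sdT
  have key : ∀ y, 0 ≤ P y * Q y ^ (a - 1) ∧
      ENNReal.ofReal (P y) / ENNReal.ofReal (Q y) ^ (1 - a)
        = ENNReal.ofReal (P y * Q y ^ (a - 1)) := by
    intro y
    rcases (hP0 y).eq_or_lt with h0 | h0
    · simp [← h0]
    · have hq := h y h0
      refine ⟨by positivity, ?_⟩
      rw [ENNReal.ofReal_rpow_of_pos hq, ← ENNReal.ofReal_div_of_pos (by positivity),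
        div_eq_mul_inv, ← Real.rpow_neg hq.le, neg_sub]
  rw [ENNReal.ofReal_sum_of_nonneg (fun y _ => (key y).1)]
  exact Finset.sum_congr rfl (fun y _ => (key y).2)

/-- as `α → 1`, `Δ_α(P‖Q)` tends to the Kullback–Leibler divergence
`D(P‖Q) = ∑_{x : P(x)>0} P(x) log₂(P(x)/Q(x))` (note each summand with `P x = 0`
vanishes). -/
theorem sundaresan_tendsto_kl {X : Type*} [Fintype X]
    (P Q : X → ℝ) (hP0 : ∀ x, 0 ≤ P x) (hP1 : ∑ x, P x = 1)
    (hQ0 : ∀ x, 0 ≤ Q x) (hQ1 : ∑ x, Q x = 1)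
    (hsupp : {x : X | 0 < P x} ⊆ {x : X | 0 < Q x}) :
    Filter.Tendsto (fun α : ℝ => sundaresan α P Q) (nhdsWithin 1 {1}ᶜ)
      (nhds (((∑ x, P x * Real.logb 2 (P x / Q x) : ℝ) : EReal))) := by
  have hPQ : ∀ x, 0 < P x → 0 < Q x := fun x hx => hsupp hx
  have hA := sdT_pos Q Q hQ0 hQ1 (fun _ h => h)
  have hB := sdT_pos P P hP0 hP1 (fun _ h => h)
  have hS := sdT_pos P Q hP0 hP1 hPQ
  have heq : ∀ a : ℝ, a ≠ 0 → a ≠ 1 → sundaresan a P Q =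
      (((Real.log (sdT Q Q a) - a * ((a - 1)⁻¹ * Real.log (sdT P Q a))
        + (a - 1)⁻¹ * Real.log (sdT P P a)) / Real.log 2 : ℝ) : EReal) := by
    intro a ha ha1
    have hA := hA a
    have hB := hB a
    have hS := hS a
    unfold sundaresan
    rw [sdT_self Q hQ0 a ha, sdT_self P hP0 a ha, sdT_ennreal P Q hP0 hPQ a,
      ENNReal.ofReal_rpow_of_pos hS, ENNReal.ofReal_rpow_of_pos hB,
      ← ENNReal.ofReal_mul hA.le, ← ENNReal.ofReal_div_of_pos (by positivity)]
    simp only [ENNReal.ofReal_ne_top, if_false]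
    rw [ENNReal.toReal_ofReal (by positivity), Real.logb,
      Real.log_div (by positivity) (by positivity), Real.log_mul (by positivity) (by positivity),
      Real.log_rpow hS, Real.log_rpow hB]
    congr 2
    have h1 : a - 1 ≠ 0 := sub_ne_zero.2 ha1
    have h2 : 1 - a ≠ 0 := sub_ne_zero.2 ha1.symm
    have h3 : (1 - a)⁻¹ = -(a - 1)⁻¹ := by rw [← inv_neg, neg_sub]
    rw [div_eq_mul_inv, div_eq_mul_inv, h3]
    ring
  have hev : ∀ᶠ a : ℝ in nhdsWithin 1 {1}ᶜ, a ≠ 0 ∧ a ≠ 1 := by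
    have h0 : ∀ᶠ a : ℝ in nhdsWithin 1 {1}ᶜ, a ≠ 0 :=
      nhdsWithin_le_nhds (isOpen_ne.mem_nhds one_ne_zero)
    filter_upwards [h0, self_mem_nhdsWithin] with a h1 h2 using ⟨h1, h2⟩
  have hlA : Tendsto (fun a => Real.log (sdT Q Q a)) (nhdsWithin 1 {1}ᶜ) (nhds 0) := by
    have h1 := (sdT_log Q Q hQ0 hQ1 (fun _ h => h)).continuousAt.tendsto
    have h2 : sdT Q Q 1 = 1 := by simp [sdT, hQ1]
    rw [h2, Real.log_one] at h1
    exact h1.mono_left nhdsWithin_le_nhds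
  have hid : Tendsto (fun a : ℝ => a) (nhdsWithin 1 {1}ᶜ) (nhds 1) :=
    tendsto_id.mono_left nhdsWithin_le_nhds
  have hlim := ((hlA.sub (hid.mul (sdT_slope P Q hP0 hP1 hPQ))).add
    (sdT_slope P P hP0 hP1 (fun _ h => h))).div_const (Real.log 2)
  have hval : (0 - 1 * ∑ x, P x * Real.log (Q x) + ∑ x, P x * Real.log (P x)) / Real.log 2
      = ∑ x, P x * Real.logb 2 (P x / Q x) := by
    rw [zero_sub, one_mul, neg_add_eq_sub, ← Finset.sum_sub_distrib, Finset.sum_div]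
    refine Finset.sum_congr rfl (fun x _ => ?_)
    rcases (hP0 x).eq_or_lt with h0 | h0
    · simp [← h0]
    · rw [Real.logb, Real.log_div h0.ne' (hPQ x h0).ne']
      ring
  rw [hval] at hlim
  refine ((continuous_coe_real_ereal.tendsto _).comp hlim).congr' ?_
  filter_upwards [hev] with a ha
  exact (heq a ha.1 ha.2).symm
end

section
/- Let P and Q be probability mass functions on a finite set 𝒳 with supp(P) ⊆ supp(Q). Then lim_{α→0⁺} Δ_α(P‖Q) = log₂( |supp(Q)| / |supp(P)| ). -/
open scoped ENNReal
open Filter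

lemma sund_sum_tendsto {X : Type*} [Fintype X] (Q : X → ℝ) (hQ0 : ∀ x, 0 ≤ Q x) :
    Tendsto (fun α : ℝ => ∑ y, Q y ^ α) (nhdsWithin 0 (Set.Ioi 0))
      (nhds ((Finset.univ.filter fun x : X => 0 < Q x).card : ℝ)) := by
  have h : ((Finset.univ.filter fun x : X => 0 < Q x).card : ℝ)
      = ∑ y, if 0 < Q y then (1 : ℝ) else 0 := by simp
  rw [h]
  refine tendsto_finsetSum _ fun y _ => ?_
  by_cases hy : 0 < Q y
  · rw [if_pos hy]
    have := (Real.continuousAt_const_rpow (a := Q y) (b := 0) hy.ne').tendsto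
    rw [Real.rpow_zero] at this
    exact this.mono_left nhdsWithin_le_nhds
  · rw [if_neg hy]
    have h0 : Q y = 0 := le_antisymm (not_lt.mp hy) (hQ0 y)
    refine tendsto_const_nhds.congr' ?_
    filter_upwards [self_mem_nhdsWithin] with α hα
    rw [h0, Real.zero_rpow (ne_of_gt hα)]

lemma sund_card_pos {X : Type*} [Fintype X] (P : X → ℝ) (hP0 : ∀ x, 0 ≤ P x)
    (hP1 : ∑ x, P x = 1) : ∃ x, 0 < P x := by
  by_contra! h
  have : ∑ x, P x = 0 := Finset.sum_eq_zero fun x _ => le_antisymm (h x) (hP0 x)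
  linarith

lemma sund_sum_pos {X : Type*} [Fintype X] (P : X → ℝ) (hP0 : ∀ x, 0 ≤ P x)
    (hP : ∃ x, 0 < P x) (α : ℝ) : 0 < ∑ x, P x ^ α := by
  obtain ⟨x, hx⟩ := hP
  exact Finset.sum_pos' (fun y _ => Real.rpow_nonneg (hP0 y) _)
    ⟨x, Finset.mem_univ _, Real.rpow_pos_of_pos hx _⟩

lemma sund_B_pos {X : Type*} [Fintype X] (P Q : X → ℝ) (hP0 : ∀ x, 0 ≤ P x)
    (hQ0 : ∀ x, 0 ≤ Q x) (hP : ∃ x, 0 < P x) (hs : ∀ x, 0 < P x → 0 < Q x) (α : ℝ) :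
    0 < ∑ x, P x / Q x ^ (1 - α) := by
  obtain ⟨x, hx⟩ := hP
  exact Finset.sum_pos' (fun y _ => div_nonneg (hP0 y) (Real.rpow_nonneg (hQ0 y) _))
    ⟨x, Finset.mem_univ _, div_pos hx (Real.rpow_pos_of_pos (hs x hx) _)⟩

lemma sund_eq {X : Type*} [Fintype X] (P Q : X → ℝ) (hP0 : ∀ x, 0 ≤ P x)
    (hQ0 : ∀ x, 0 ≤ Q x) (hP : ∃ x, 0 < P x) (hs : ∀ x, 0 < P x → 0 < Q x) (α : ℝ) :
    sundaresan α P Q = ((Real.logb 2 ((∑ y, Q y ^ α) *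
      (∑ y, P y / Q y ^ (1 - α)) ^ (α / (1 - α)) /
      (∑ y, P y ^ α) ^ ((1 : ℝ) / (1 - α))) : ℝ) : EReal) := by
  have hB := sund_B_pos P Q hP0 hQ0 hP hs α
  have hC := sund_sum_pos P hP0 hP α
  have hA : 0 ≤ ∑ y, Q y ^ α := Finset.sum_nonneg fun y _ => Real.rpow_nonneg (hQ0 y) _
  have e : (∑ y, ENNReal.ofReal (P y) / ENNReal.ofReal (Q y) ^ (1 - α))
      = ENNReal.ofReal (∑ y, P y / Q y ^ (1 - α)) := by
    rw [ENNReal.ofReal_sum_of_nonneg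
      (fun y _ => div_nonneg (hP0 y) (Real.rpow_nonneg (hQ0 y) _))]
    refine Finset.sum_congr rfl fun y _ => ?_
    by_cases hy : 0 < P y
    · rw [ENNReal.ofReal_rpow_of_pos (hs y hy),
        ENNReal.ofReal_div_of_pos (Real.rpow_pos_of_pos (hs y hy) _)]
    · have h0 : P y = 0 := le_antisymm (not_lt.mp hy) (hP0 y)
      simp [h0]
  unfold sundaresan
  simp only
  rw [e, ENNReal.ofReal_rpow_of_pos hB, ENNReal.ofReal_rpow_of_pos hC,
    ← ENNReal.ofReal_mul hA, ← ENNReal.ofReal_div_of_pos (Real.rpow_pos_of_pos hC _),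
    if_neg ENNReal.ofReal_ne_top, ENNReal.toReal_ofReal]
  exact div_nonneg (mul_nonneg hA (Real.rpow_nonneg hB.le _)) (Real.rpow_nonneg hC.le _)

/-- as `α → 0⁺`, `Δ_α(P‖Q)` tends to `log₂(|supp Q| / |supp P|)` when
`supp(P) ⊆ supp(Q)`. -/
theorem sundaresan_tendsto_zero {X : Type*} [Fintype X]
    (P Q : X → ℝ) (hP0 : ∀ x, 0 ≤ P x) (hP1 : ∑ x, P x = 1)
    (hQ0 : ∀ x, 0 ≤ Q x) (hQ1 : ∑ x, Q x = 1)
    (hsupp : {x : X | 0 < P x} ⊆ {x : X | 0 < Q x}) :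
    Filter.Tendsto (fun α : ℝ => sundaresan α P Q) (nhdsWithin 0 (Set.Ioi 0))
      (nhds ((Real.logb 2
        (((Finset.univ.filter fun x : X => 0 < Q x).card : ℝ) /
          ((Finset.univ.filter fun x : X => 0 < P x).card : ℝ)) : ℝ) : EReal)) := by
  have hP := sund_card_pos P hP0 hP1
  have hQ := sund_card_pos Q hQ0 hQ1
  have hs : ∀ x, 0 < P x → 0 < Q x := fun x hx => hsupp hx
  simp_rw [sund_eq P Q hP0 hQ0 hP hs]
  have cP : (0 : ℝ) < ((Finset.univ.filter fun x : X => 0 < P x).card : ℝ) := by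
    obtain ⟨x, hx⟩ := hP
    exact_mod_cast Finset.card_pos.mpr ⟨x, by simpa using hx⟩
  have cQ : (0 : ℝ) < ((Finset.univ.filter fun x : X => 0 < Q x).card : ℝ) := by
    obtain ⟨x, hx⟩ := hQ
    exact_mod_cast Finset.card_pos.mpr ⟨x, by simpa using hx⟩
  have hA := sund_sum_tendsto Q hQ0
  have hC := sund_sum_tendsto P hP0
  have hB : Tendsto (fun α : ℝ => ∑ y, P y / Q y ^ (1 - α)) (nhdsWithin 0 (Set.Ioi 0))
      (nhds (∑ y, P y / Q y ^ (1 - (0 : ℝ)))) := by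
    refine tendsto_finsetSum _ fun y _ => ?_
    by_cases hy : 0 < P y
    · have hq := hs y hy
      have hc : ContinuousAt (fun α : ℝ => P y / Q y ^ (1 - α)) 0 := by
        refine ContinuousAt.div continuousAt_const ?_ (Real.rpow_pos_of_pos hq _).ne'
        exact ContinuousAt.rpow continuousAt_const (by fun_prop) (Or.inl hq.ne')
      exact hc.tendsto.mono_left nhdsWithin_le_nhds
    · have h0 : P y = 0 := le_antisymm (not_lt.mp hy) (hP0 y)
      simp [h0]
  have e1 : Tendsto (fun α : ℝ => α / (1 - α)) (nhdsWithin 0 (Set.Ioi 0)) (nhds 0) := by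
    have hc : ContinuousAt (fun α : ℝ => α / (1 - α)) 0 :=
      ContinuousAt.div (by fun_prop) (by fun_prop) (by norm_num)
    simpa using hc.tendsto.mono_left (nhdsWithin_le_nhds (s := Set.Ioi 0))
  have e2 : Tendsto (fun α : ℝ => 1 / (1 - α)) (nhdsWithin 0 (Set.Ioi 0)) (nhds 1) := by
    have hc : ContinuousAt (fun α : ℝ => 1 / (1 - α)) 0 :=
      ContinuousAt.div (by fun_prop) (by fun_prop) (by norm_num)
    simpa using hc.tendsto.mono_left (nhdsWithin_le_nhds (s := Set.Ioi 0))
  have hBp := hB.rpow e1 (Or.inl (sund_B_pos P Q hP0 hQ0 hP hs 0).ne')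
  have hCp := hC.rpow e2 (Or.inl cP.ne')
  rw [Real.rpow_zero] at hBp
  rw [Real.rpow_one] at hCp
  have hR := (hA.mul hBp).div hCp cP.ne'
  rw [mul_one] at hR
  have hL := (hR.log (div_pos cQ cP).ne').div_const (Real.log 2)
  exact (continuous_coe_real_ereal.tendsto _).comp hL
end
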